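/- Let W ∈ 𝒲. Then W is weakly isomorphic to a monotone decreasing 0–1 valued graphon if and only if W(x₁,x₂)(1 − W(x₂,x₃))W(x₃,x₄)(1 − W(x₄,x₁)) = 0 for almost every (x₁,x₂,x₃,x₄) ∈ [0,1]⁴. Moreover, if W ∈ 𝒲₀, then this is equivalent to the single equation ∫_{[0,1]⁴} W(x₁,x₂)(1 − W(x₂,x₃))W(x₃,x₄)(1 − W(x₄,x₁)) dx₁dx₂dx₃dx₄ = 0. -/

import Mathlib

open MeasureTheory
open scoped Classical

noncomputable section

/-- The unit interval `[0,1]` as a subset of `ℝ`. -/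
def I01 : Set ℝ := Set.Icc 0 1

/-- The cube `[0,1]^n`. -/
def cube (n : ℕ) : Set (Fin n → ℝ) := Set.univ.pi fun _ => I01

/-- `W` belongs to `𝒲`: a bounded symmetric measurable function on `[0,1]²`. -/
def memW (W : ℝ → ℝ → ℝ) : Prop :=
  Measurable (Function.uncurry W) ∧
  (∀ x ∈ I01, ∀ y ∈ I01, W x y = W y x) ∧
  ∃ C : ℝ, ∀ x ∈ I01, ∀ y ∈ I01, |W x y| ≤ C

/-- `W` belongs to `𝒲₀`: a graphon, i.e. symmetric measurable with values in `[0,1]`. -/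
def memW0 (W : ℝ → ℝ → ℝ) : Prop :=
  Measurable (Function.uncurry W) ∧
  (∀ x ∈ I01, ∀ y ∈ I01, W x y = W y x) ∧
  ∀ x ∈ I01, ∀ y ∈ I01, W x y ∈ Set.Icc (0 : ℝ) 1

/-- Homomorphism density `t(F,W)` of a finite simple graph `F` in `W`. -/
def homDensity {n : ℕ} (F : SimpleGraph (Fin n)) (W : ℝ → ℝ → ℝ) : ℝ :=
  ∫ x in cube n,
    ∏ p ∈ Finset.univ.filter (fun p : Fin n × Fin n => p.1 < p.2 ∧ F.Adj p.1 p.2),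
      W (x p.1) (x p.2)

/-- Two kernels are weakly isomorphic if all their homomorphism densities agree. -/
def WeaklyIsomorphic (U W : ℝ → ℝ → ℝ) : Prop :=
  ∀ (n : ℕ) (F : SimpleGraph (Fin n)), homDensity F U = homDensity F W

/-- `W` is finitely forcible within the class `A`. -/
def FinitelyForcible (A : (ℝ → ℝ → ℝ) → Prop) (W : ℝ → ℝ → ℝ) : Prop :=
  A W ∧ ∃ (k : ℕ) (n : Fin k → ℕ) (F : ∀ i, SimpleGraph (Fin (n i))),
    ∀ U, A U → (∀ i, homDensity (F i) U = homDensity (F i) W) → WeaklyIsomorphic U W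

/-- Density function `t^k(F,W)` of a `k`-labeled graph, as a function of the
labeled variables; the graph has `k` labeled and `m` unlabeled vertices. -/
def labDensity {k m : ℕ} (F : SimpleGraph (Fin (k + m))) (W : ℝ → ℝ → ℝ)
    (x : Fin k → ℝ) : ℝ :=
  ∫ y in cube m,
    ∏ p ∈ Finset.univ.filter
        (fun p : Fin (k + m) × Fin (k + m) => p.1 < p.2 ∧ F.Adj p.1 p.2),
      W (Fin.append x y p.1) (Fin.append x y p.2)

/-- A monotone decreasing 0–1 valued graphon. -/
def MonotoneDecr01 (U : ℝ → ℝ → ℝ) : Prop :=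
  Measurable (Function.uncurry U) ∧
  (∀ x ∈ I01, ∀ y ∈ I01, U x y = U y x) ∧
  (∀ x ∈ I01, ∀ y ∈ I01, U x y = 0 ∨ U x y = 1) ∧
  (∀ x x' y y' : ℝ, x ∈ I01 → x' ∈ I01 → y ∈ I01 → y' ∈ I01 →
    x ≤ x' → y ≤ y' → U x' y' ≤ U x y)


/-! ## Basic objects -/

abbrev nu : Measure ℝ := volume.restrict I01

instance nu_prob : IsProbabilityMeasure nu := by
  constructor
  simp [nu, I01]

lemma cube_measure (n : ℕ) :
    (volume.restrict (cube n) : Measure (Fin n → ℝ)) = Measure.pi (fun _ => nu) := by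
  unfold cube
  rw [volume_pi, Measure.restrict_pi_pi]

/-- bounded measurable functions -/
def BM {α : Type*} [MeasurableSpace α] (f : α → ℝ) : Prop :=
  Measurable f ∧ ∃ C : ℝ, ∀ a, |f a| ≤ C

section BMlemmas
variable {α β : Type*} [MeasurableSpace α] [MeasurableSpace β]

lemma BM.integrable {f : α → ℝ} (hf : BM f) (μ : Measure α) [IsFiniteMeasure μ] :
    Integrable f μ := by
  obtain ⟨hm, C, hC⟩ := hf
  exact Integrable.of_bound hm.aestronglyMeasurable C (Filter.Eventually.of_forall hC)

lemma BM.mul {f g : α → ℝ} (hf : BM f) (hg : BM g) : BM (fun a => f a * g a) := by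
  obtain ⟨hm, C, hC⟩ := hf
  obtain ⟨hm', C', hC'⟩ := hg
  refine ⟨hm.mul hm', C * C', fun a => ?_⟩
  rw [abs_mul]
  exact mul_le_mul (hC a) (hC' a) (abs_nonneg _) ((abs_nonneg _).trans (hC a))

lemma BM.add {f g : α → ℝ} (hf : BM f) (hg : BM g) : BM (fun a => f a + g a) := by
  obtain ⟨hm, C, hC⟩ := hf
  obtain ⟨hm', C', hC'⟩ := hg
  refine ⟨hm.add hm', C + C', fun a => (abs_add_le _ _).trans (add_le_add (hC a) (hC' a))⟩

lemma BM.const (c : ℝ) : BM (fun _ : α => c) := ⟨measurable_const, |c|, fun _ => le_rfl⟩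

lemma BM.comp {f : β → ℝ} (hf : BM f) {g : α → β} (hg : Measurable g) : BM (fun a => f (g a)) :=
  ⟨hf.1.comp hg, hf.2.imp fun _ h a => h _⟩

lemma BM.sub {f g : α → ℝ} (hf : BM f) (hg : BM g) : BM (fun a => f a - g a) := by
  have := hf.add ((BM.const (-1)).mul hg)
  convert this using 2
  ring

lemma BM.integral {f : α × β → ℝ} (hf : BM f) (μ : Measure β) [IsProbabilityMeasure μ] :
    BM (fun a => ∫ b, f (a, b) ∂μ) := by
  obtain ⟨hm, C, hC⟩ := hf
  refine ⟨(hm.stronglyMeasurable.integral_prod_right').measurable, C, fun a => ?_⟩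
  have := norm_integral_le_of_norm_le_const (μ := μ) (f := fun b => f (a, b)) (C := C)
    (Filter.Eventually.of_forall fun b => hC (a, b))
  simpa using this

lemma BM.list_prod {ι : Type*} {f : ι → α → ℝ} (E : List ι) (hf : ∀ i, BM (f i)) :
    BM (fun a => (E.map (fun i => f i a)).prod) := by
  induction E with
  | nil => simpa using BM.const 1
  | cons e E ih => simpa using (hf e).mul ih

lemma BM.cauchy {f g : α → ℝ} (hf : BM f) (hg : BM g) (μ : Measure α) [IsProbabilityMeasure μ] :
    (∫ a, f a * g a ∂μ) ^ 2 ≤ (∫ a, f a * f a ∂μ) * ∫ a, g a * g a ∂μ := by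
  have key : ∀ t : ℝ, 0 ≤ (∫ a, g a * g a ∂μ) * (t * t) + (2 * ∫ a, f a * g a ∂μ) * t
      + ∫ a, f a * f a ∂μ := by
    intro t
    have h1 : 0 ≤ ∫ a, (f a + t * g a) * (f a + t * g a) ∂μ :=
      integral_nonneg fun a => mul_self_nonneg _
    have h2 : ∫ a, (f a + t * g a) * (f a + t * g a) ∂μ =
        ∫ a, ((t * t) * (g a * g a) + (2 * t) * (f a * g a)) + f a * f a ∂μ := by
      congr 1; ext a; ring
    rw [h2, integral_add, integral_add, integral_const_mul, integral_const_mul] at h1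
    · linarith
    · exact ((BM.const _).mul (hg.mul hg)).integrable μ
    · exact ((BM.const _).mul (hf.mul hg)).integrable μ
    · exact (((BM.const _).mul (hg.mul hg)).add ((BM.const _).mul (hf.mul hg))).integrable μ
    · exact (hf.mul hf).integrable μ
  have := discrim_le_zero key
  unfold discrim at this
  nlinarith
end BMlemmas

/-- bounded kernels -/
def Ker : Submodule ℝ (ℝ × ℝ → ℝ) where
  carrier := {K | BM K}
  add_mem' ha hb := ha.add hb
  zero_mem' := BM.const 0
  smul_mem' c K hK := (BM.const c).mul hK

/-- `L²` form on kernels -/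
def ip : Ker →ₗ[ℝ] Ker →ₗ[ℝ] ℝ :=
  LinearMap.mk₂ ℝ (fun K L => ∫ p, K.1 p * L.1 p ∂(nu.prod nu))
    (by
      intro K K' L
      rw [← integral_add ((K.2.mul L.2).integrable _) ((K'.2.mul L.2).integrable _)]
      congr 1; ext p; simp; ring)
    (by
      intro c K L
      rw [smul_eq_mul, ← integral_const_mul]
      congr 1; ext p; simp; ring)
    (by
      intro K K' L
      rw [← integral_add ((K.2.mul K'.2).integrable _) ((K.2.mul L.2).integrable _)]
      congr 1; ext p; simp; ring)
    (by
      intro c K L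
      rw [smul_eq_mul, ← integral_const_mul]
      congr 1; ext p; simp; ring)

lemma ip_apply (K L : Ker) : ip K L = ∫ p, K.1 p * L.1 p ∂(nu.prod nu) := rfl

lemma ip_comm (K L : Ker) : ip K L = ip L K := by
  simp only [ip_apply]; congr 1; ext p; ring

lemma ip_nonneg (K : Ker) : 0 ≤ ip K K := by
  rw [ip_apply]; exact integral_nonneg fun _ => mul_self_nonneg _

lemma ip_cauchy (K L : Ker) : (ip K L) ^ 2 ≤ ip K K * ip L L := BM.cauchy K.2 L.2 _

lemma ip_iter (K L : Ker) : ip K L = ∫ x, ∫ y, K.1 (x, y) * L.1 (x, y) ∂nu ∂nu := by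
  rw [ip_apply, integral_prod _ ((K.2.mul L.2).integrable _)]

lemma compBM (W K : Ker) :
    BM (fun q : (ℝ × ℝ) × ℝ => K.1 (q.1.1, q.2) * W.1 (q.2, q.1.2)) :=
  (K.2.comp (by fun_prop : Measurable fun q : (ℝ × ℝ) × ℝ => (q.1.1, q.2))).mul
    (W.2.comp (by fun_prop : Measurable fun q : (ℝ × ℝ) × ℝ => (q.2, q.1.2)))

/-- right composition with `W` -/
def Bop (W : Ker) : Ker →ₗ[ℝ] Ker where
  toFun K := ⟨fun p => ∫ z, K.1 (p.1, z) * W.1 (z, p.2) ∂nu, (compBM W K).integral nu⟩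
  map_add' K L := by
    apply Subtype.ext
    funext p
    show ∫ z, (K.1 (p.1, z) + L.1 (p.1, z)) * W.1 (z, p.2) ∂nu = _ + _
    simp only
    rw [← integral_add (((compBM W K).comp measurable_prodMk_left).integrable _)
      (((compBM W L).comp measurable_prodMk_left).integrable _)]
    congr 1; ext z; ring
  map_smul' c K := by
    apply Subtype.ext
    funext p
    show ∫ z, (c * K.1 (p.1, z)) * W.1 (z, p.2) ∂nu = c * _
    simp only
    rw [← integral_const_mul]
    congr 1; ext z; ring

lemma Bop_apply (W K : Ker) (p : ℝ × ℝ) :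
    (Bop W K).1 p = ∫ z, K.1 (p.1, z) * W.1 (z, p.2) ∂nu := rfl

/-- symmetric kernels -/
def SymK (W : Ker) : Prop := ∀ x y, W.1 (x, y) = W.1 (y, x)

lemma Bop_self (W : Ker) (hW : SymK W) (K L : Ker) : ip (Bop W K) L = ip K (Bop W L) := by
  rw [ip_iter, ip_iter]
  congr 1; ext x
  simp only [Bop_apply]
  have h1 : ∀ y, (∫ z, K.1 (x, z) * W.1 (z, y) ∂nu) * L.1 (x, y) =
      ∫ z, K.1 (x, z) * W.1 (z, y) * L.1 (x, y) ∂nu := fun y => by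
    rw [integral_mul_const]
  have h2 : ∀ y, K.1 (x, y) * (∫ z, L.1 (x, z) * W.1 (z, y) ∂nu) =
      ∫ z, K.1 (x, y) * (L.1 (x, z) * W.1 (z, y)) ∂nu := fun y => by
    rw [integral_const_mul]
  simp only [h1, h2]
  rw [integral_integral_swap]
  · congr 1; ext z; congr 1; ext y
    rw [hW z y]; ring
  · apply BM.integrable
    exact ((K.2.comp (by fun_prop : Measurable fun q : ℝ × ℝ => (x, q.2))).mul
      (W.2.comp (by fun_prop : Measurable fun q : ℝ × ℝ => (q.2, q.1)))).mul
      (L.2.comp (by fun_prop : Measurable fun q : ℝ × ℝ => (x, q.1)))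

lemma Bop_bound (W : Ker) (M : ℝ) (hM : ∀ p, |W.1 p| ≤ M) (K : Ker) :
    ip (Bop W K) (Bop W K) ≤ M ^ 2 * ip K K := by
  have hsec : ∀ (L : Ker) x, BM (fun y => L.1 (x, y)) := fun L x =>
    L.2.comp measurable_prodMk_left
  have hsec' : ∀ (L : Ker) y, BM (fun x => L.1 (x, y)) := fun L x =>
    L.2.comp measurable_prodMk_right
  have hin : ∀ L : Ker, BM (fun x => ∫ y, L.1 (x, y) * L.1 (x, y) ∂nu) := fun L =>
    (L.2.mul L.2).integral nu
  rw [ip_iter, ip_iter, ← integral_const_mul]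
  apply integral_mono ((hin _).integrable nu) (((BM.const _).mul (hin K)).integrable nu)
  intro x
  simp only
  have : ∀ y, (Bop W K).1 (x, y) * (Bop W K).1 (x, y) ≤
      M ^ 2 * ∫ y, K.1 (x, y) * K.1 (x, y) ∂nu := by
    intro y
    have h := BM.cauchy (hsec K x) (hsec' W y) nu
    rw [← sq, Bop_apply]
    refine h.trans ?_
    rw [mul_comm]
    refine mul_le_mul_of_nonneg_right ?_ (integral_nonneg fun _ => mul_self_nonneg _)
    have := integral_mono (μ := nu) (((hsec' W y).mul (hsec' W y)).integrable nu)
      ((BM.const (M ^ 2)).integrable nu) (fun z => by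
        simp only
        rw [← sq, ← sq_abs]
        exact pow_le_pow_left₀ (abs_nonneg _) (hM _) 2)
    simpa using this
  have := integral_mono (μ := nu) (((hsec (Bop W K) x).mul (hsec (Bop W K) x)).integrable nu)
      ((BM.const _).integrable nu) this
  simpa using this

/-- the contraction `1 - B²/M²` -/
def Sop (W : Ker) (M : ℝ) : Module.End ℝ Ker :=
  LinearMap.id - (M ^ 2)⁻¹ • (Bop W ∘ₗ Bop W)

lemma Sop_apply (W : Ker) (M : ℝ) (K : Ker) :
    Sop W M K = K - (M ^ 2)⁻¹ • Bop W (Bop W K) := rfl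

lemma Sop_self (W : Ker) (hW : SymK W) (M : ℝ) (K L : Ker) :
    ip (Sop W M K) L = ip K (Sop W M L) := by
  simp only [Sop_apply, map_sub, map_smul, LinearMap.sub_apply, LinearMap.smul_apply,
    Bop_self W hW]

lemma Sop_pow_self (W : Ker) (hW : SymK W) (M : ℝ) (n : ℕ) (K L : Ker) :
    ip ((Sop W M ^ n) K) L = ip K ((Sop W M ^ n) L) := by
  induction n generalizing K L with
  | zero => rfl
  | succ n ih =>
    rw [pow_succ', Module.End.mul_apply, Sop_self W hW, ih, ← Module.End.mul_apply, ← pow_succ,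
      pow_succ']

lemma Sop_step (W : Ker) (hW : SymK W) (M : ℝ) (h0 : 0 < M) (hM : ∀ p, |W.1 p| ≤ M) (K : Ker) :
    ip (Sop W M K) (Sop W M K) + (M ^ 2)⁻¹ * ip (Bop W K) (Bop W K) ≤ ip K K := by
  have h1 := Bop_bound W M hM (Bop W K)
  have h2 : ip (Sop W M K) (Sop W M K) = ip K K - 2 * (M ^ 2)⁻¹ * ip (Bop W K) (Bop W K) +
      (M ^ 2)⁻¹ ^ 2 * ip (Bop W (Bop W K)) (Bop W (Bop W K)) := by
    simp only [Sop_apply, map_sub, map_smul, LinearMap.sub_apply, LinearMap.smul_apply,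
      smul_eq_mul]
    rw [Bop_self W hW (Bop W K) K, ← Bop_self W hW K (Bop W K)]
    ring
  have h3 : (M ^ 2)⁻¹ ^ 2 * ip (Bop W (Bop W K)) (Bop W (Bop W K)) ≤
      (M ^ 2)⁻¹ * ip (Bop W K) (Bop W K) := by
    calc _ ≤ (M ^ 2)⁻¹ ^ 2 * (M ^ 2 * ip (Bop W K) (Bop W K)) :=
          mul_le_mul_of_nonneg_left h1 (by positivity)
      _ = _ := by field_simp
  linarith

lemma Sop_pow_le (W : Ker) (hW : SymK W) (M : ℝ) (h0 : 0 < M) (hM : ∀ p, |W.1 p| ≤ M) (K : Ker)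
    (n : ℕ) : ip ((Sop W M ^ n) K) ((Sop W M ^ n) K) ≤ ip K K := by
  induction n with
  | zero => exact le_rfl
  | succ n ih =>
    rw [pow_succ', Module.End.mul_apply]
    have := Sop_step W hW M h0 hM ((Sop W M ^ n) K)
    have h2 := mul_nonneg (by positivity : 0 ≤ (M ^ 2)⁻¹) (ip_nonneg (Bop W ((Sop W M ^ n) K)))
    linarith

lemma Bop_Sop_tendsto (W : Ker) (hW : SymK W) (M : ℝ) (h0 : 0 < M) (hM : ∀ p, |W.1 p| ≤ M)
    (K : Ker) : Filter.Tendsto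
      (fun n => ip (Bop W ((Sop W M ^ n) K)) (Bop W ((Sop W M ^ n) K))) Filter.atTop (nhds 0) := by
  have hs : ∀ N, ip ((Sop W M ^ N) K) ((Sop W M ^ N) K) +
      ∑ n ∈ Finset.range N, (M ^ 2)⁻¹ * ip (Bop W ((Sop W M ^ n) K)) (Bop W ((Sop W M ^ n) K))
      ≤ ip K K := by
    intro N
    induction N with
    | zero => simp
    | succ N ih =>
      rw [Finset.sum_range_succ, pow_succ', Module.End.mul_apply]
      have := Sop_step W hW M h0 hM ((Sop W M ^ N) K)
      linarith
  have hsum : Summable fun n => (M ^ 2)⁻¹ *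
      ip (Bop W ((Sop W M ^ n) K)) (Bop W ((Sop W M ^ n) K)) := by
    refine summable_of_sum_range_le (c := ip K K)
      (fun n => mul_nonneg (by positivity) (ip_nonneg _)) (fun N => ?_)
    have := hs N
    have := ip_nonneg ((Sop W M ^ N) K)
    linarith
  have h := hsum.tendsto_atTop_zero.const_mul (M ^ 2)
  simp only [mul_zero] at h
  refine h.congr fun n => ?_
  field_simp

/-! ## Weak and strong convergence of `Sⁿ W` to zero -/

/-- multiply by a function of the first variable -/
def mulx (f : ℝ → ℝ) (hf : BM f) : Ker →ₗ[ℝ] Ker where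
  toFun K := ⟨fun p => f p.1 * K.1 p, (hf.comp measurable_fst).mul K.2⟩
  map_add' K L := by
    apply Subtype.ext; funext p
    show f p.1 * (K.1 p + L.1 p) = f p.1 * K.1 p + f p.1 * L.1 p
    ring
  map_smul' c K := by
    apply Subtype.ext; funext p
    show f p.1 * (c * K.1 p) = c * (f p.1 * K.1 p)
    ring

lemma mulx_apply (f : ℝ → ℝ) (hf : BM f) (K : Ker) (p : ℝ × ℝ) :
    (mulx f hf K).1 p = f p.1 * K.1 p := rfl

lemma mulx_Bop (f : ℝ → ℝ) (hf : BM f) (W K : Ker) :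
    Bop W (mulx f hf K) = mulx f hf (Bop W K) := by
  apply Subtype.ext; funext p
  rw [mulx_apply, Bop_apply, Bop_apply, ← integral_const_mul]
  congr 1; ext z
  rw [mulx_apply]; ring

lemma mulx_Sop (f : ℝ → ℝ) (hf : BM f) (W : Ker) (M : ℝ) (n : ℕ) (K : Ker) :
    (Sop W M ^ n) (mulx f hf K) = mulx f hf ((Sop W M ^ n) K) := by
  induction n with
  | zero => rfl
  | succ n ih =>
    rw [pow_succ', Module.End.mul_apply, Module.End.mul_apply, ih, Sop_apply, Sop_apply,
      mulx_Bop, mulx_Bop, map_sub, map_smul]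

/-- kernels that only depend on the second variable -/
def Indep (K : Ker) : Prop := ∀ x x' y, K.1 (x, y) = K.1 (x', y)

lemma Indep.bop {K : Ker} (h : Indep K) (W : Ker) : Indep (Bop W K) := by
  intro x x' y
  rw [Bop_apply, Bop_apply]
  simp only [h x x']

lemma Indep.sop {K : Ker} (h : Indep K) (W : Ker) (M : ℝ) (n : ℕ) :
    Indep ((Sop W M ^ n) K) := by
  induction n with
  | zero => exact h
  | succ n ih =>
    rw [pow_succ', Module.End.mul_apply]
    intro x x' y
    rw [Sop_apply]
    show _ - (M ^ 2)⁻¹ * _ = _ - (M ^ 2)⁻¹ * _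
    rw [(ih.bop W).bop W x x' y, ih x x' y]

/-- function of second variable as a kernel -/
def sndK (g : ℝ → ℝ) (hg : BM g) : Ker := ⟨fun p => g p.2, hg.comp measurable_snd⟩

lemma weak_rect (W : Ker) (hW : SymK W) (M : ℝ) (h0 : 0 < M) (hM : ∀ p, |W.1 p| ≤ M)
    (f g : ℝ → ℝ) (hf : BM f) (hg : BM g) :
    Filter.Tendsto (fun n => ip ((Sop W M ^ n) W) (mulx f hf (sndK g hg)))
      Filter.atTop (nhds 0) := by
  have key : ∀ n, ip ((Sop W M ^ n) W) (mulx f hf (sndK g hg)) =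
      ip (Bop W ((Sop W M ^ n) (sndK g hg))) (sndK f hf) := by
    intro n
    have hind : Indep ((Sop W M ^ n) (sndK g hg)) :=
      Indep.sop (fun _ _ _ => rfl) W M n
    rw [Sop_pow_self W hW, mulx_Sop]
    set G := (Sop W M ^ n) (sndK g hg)
    rw [ip_iter, ip_iter]
    have : ∀ x', ∫ y, (Bop W G).1 (x', y) * (sndK f hf).1 (x', y) ∂nu =
        ∫ x, ∫ y, W.1 (x, y) * (mulx f hf G).1 (x, y) ∂nu ∂nu := by
      intro x'
      congr 1; ext x
      show _ * f x = _
      rw [Bop_apply, ← integral_mul_const]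
      congr 1; ext y
      show G.1 (x', y) * W.1 (y, x) * f x = W.1 (x, y) * (f x * G.1 (x, y))
      rw [hind x' x y, hW x y]; ring
    simp only [this]
    simp
  simp only [key]
  have hb := Bop_Sop_tendsto W hW M h0 hM (sndK g hg)
  have hc := hb.mul_const (ip (sndK f hf) (sndK f hf))
  rw [zero_mul] at hc
  have hsq : Filter.Tendsto (fun n => (ip (Bop W ((Sop W M ^ n) (sndK g hg))) (sndK f hf)) ^ 2)
      Filter.atTop (nhds 0) :=
    squeeze_zero (fun _ => sq_nonneg _) (fun n => ip_cauchy _ _) hc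
  have := hsq.sqrt
  simp only [Real.sqrt_sq_eq_abs, Real.sqrt_zero] at this
  exact (tendsto_zero_iff_abs_tendsto_zero _).2 this

/-- `Q` is weakly killed by `Sⁿ W` -/
def Good (W : Ker) (M : ℝ) (Q : Ker) : Prop :=
  Filter.Tendsto (fun n => ip ((Sop W M ^ n) W) Q) Filter.atTop (nhds 0)

lemma good_close (W : Ker) (hW : SymK W) (M : ℝ) (h0 : 0 < M) (hM : ∀ p, |W.1 p| ≤ M) (Q : Ker)
    (h : ∀ ε > 0, ∃ Q', Good W M Q' ∧ ip (Q - Q') (Q - Q') ≤ ε) : Good W M Q := by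
  unfold Good
  rw [Metric.tendsto_atTop]
  intro ε hε
  have hw := ip_nonneg W
  obtain ⟨Q', hQ', hd⟩ := h ((ε / 2) ^ 2 / (ip W W + 1)) (by positivity)
  obtain ⟨N, hN⟩ := Metric.tendsto_atTop.1 hQ' (ε / 2) (by positivity)
  refine ⟨N, fun n hn => ?_⟩
  have h1 := hN n hn
  rw [Real.dist_eq, sub_zero] at h1 ⊢
  have h2 : ip ((Sop W M ^ n) W) Q = ip ((Sop W M ^ n) W) Q' + ip ((Sop W M ^ n) W) (Q - Q') := by
    rw [map_sub]; ring
  have h3 : |ip ((Sop W M ^ n) W) (Q - Q')| ≤ ε / 2 := by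
    apply abs_le_of_sq_le_sq _ (by positivity)
    calc _ ≤ _ := ip_cauchy _ _
      _ ≤ ip W W * ((ε / 2) ^ 2 / (ip W W + 1)) :=
        mul_le_mul (Sop_pow_le W hW M h0 hM W n) hd (ip_nonneg _) hw
      _ ≤ (ε / 2) ^ 2 := by
        rw [mul_div_assoc', div_le_iff₀ (by positivity)]
        nlinarith [sq_nonneg (ε / 2)]
  rw [h2]
  calc _ ≤ _ := abs_add_le _ _
    _ < ε := by linarith

lemma Good.add {W : Ker} {M : ℝ} {Q Q' : Ker} (h : Good W M Q) (h' : Good W M Q') :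
    Good W M (Q + Q') := by
  have := Filter.Tendsto.add h h'
  simpa [Good] using this

lemma Good.smul {W : Ker} {M : ℝ} {Q : Ker} (c : ℝ) (h : Good W M Q) :
    Good W M (c • Q) := by
  have := Filter.Tendsto.const_mul c h
  simpa [Good] using this

/-- indicator kernel -/
def indK (s : Set (ℝ × ℝ)) (hs : MeasurableSet s) : Ker :=
  ⟨s.indicator (fun _ => 1), measurable_const.indicator hs, 1, fun a => by
    by_cases h : a ∈ s <;> simp [h]⟩

lemma indBM (s : Set ℝ) (hs : MeasurableSet s) : BM (s.indicator (fun _ => (1 : ℝ))) :=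
  ⟨measurable_const.indicator hs, 1, fun a => by by_cases h : a ∈ s <;> simp [h]⟩

lemma good_ind (W : Ker) (hW : SymK W) (M : ℝ) (h0 : 0 < M) (hM : ∀ p, |W.1 p| ≤ M)
    (s : Set (ℝ × ℝ)) (hs : MeasurableSet s) : Good W M (indK s hs) := by
  induction s, hs using MeasurableSpace.induction_on_inter generateFrom_prod.symm isPiSystem_prod with
  | empty =>
    have : indK ∅ MeasurableSet.empty = (0 : ℝ) • W := by
      apply Subtype.ext; funext p; simp [indK]
    rw [this, zero_smul]; simp [Good]
  | basic t ht =>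
    obtain ⟨a, ha, b, hb, rfl⟩ := ht
    have := weak_rect W hW M h0 hM _ _ (indBM a ha) (indBM b hb)
    unfold Good
    convert this using 3
    apply Subtype.ext; funext p
    rw [mulx_apply]
    simp only [indK, sndK]
    by_cases h1 : p.1 ∈ a <;> by_cases h2 : p.2 ∈ b <;> simp [Set.indicator, h1, h2]
  | compl t ht ih =>
    have h1 := weak_rect W hW M h0 hM _ _ (indBM _ MeasurableSet.univ) (indBM _ MeasurableSet.univ)
    have h2 := Good.add h1 (ih.smul (-1))
    convert h2 using 1
    apply Subtype.ext; funext p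
    show tᶜ.indicator (fun _ => (1 : ℝ)) p = (Set.univ.indicator (fun _ => (1 : ℝ)) p.1 *
      Set.univ.indicator (fun _ => (1 : ℝ)) p.2) + (-1) * t.indicator (fun _ => (1 : ℝ)) p
    by_cases h1 : p ∈ t <;> simp [h1]
  | iUnion f hd hm ih =>
    apply good_close W hW M h0 hM
    intro ε hε
    have hpart : ∀ N, Good W M (indK (⋃ i ∈ Finset.range N, f i)
        (Finset.measurableSet_biUnion _ fun i _ => hm i)) := by
      intro N
      induction N with
      | zero =>
        have : indK (⋃ i ∈ Finset.range 0, f i)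
            (Finset.measurableSet_biUnion _ fun i _ => hm i) = (0 : ℝ) • W := by
          apply Subtype.ext; funext p; simp [indK]
        rw [this, zero_smul]; simp [Good]
      | succ N ihN =>
        convert ihN.add (ih N) using 1
        apply Subtype.ext; funext p
        show (⋃ i ∈ Finset.range (N + 1), f i).indicator (fun _ => (1 : ℝ)) p =
          (⋃ i ∈ Finset.range N, f i).indicator (fun _ => (1 : ℝ)) p + (f N).indicator (fun _ => (1 : ℝ)) p
        have hdis : Disjoint (⋃ i ∈ Finset.range N, f i) (f N) := by
          rw [Set.disjoint_iUnion₂_left]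
          intro i hi
          exact hd (by have := Finset.mem_range.1 hi; omega)
        have := congrFun (Set.indicator_union_of_disjoint hdis (fun _ => (1 : ℝ))) p
        refine Eq.trans ?_ this
        · congr 1
          rw [Finset.range_add_one, Finset.set_biUnion_insert, Set.union_comm]
    have hU : ∀ N, MeasurableSet ((⋃ i, f i) \ ⋃ i ∈ Finset.range N, f i) := fun N =>
      (MeasurableSet.iUnion hm).diff (Finset.measurableSet_biUnion _ fun i _ => hm i)
    have hlim : Filter.Tendsto (fun N => (nu.prod nu) ((⋃ i, f i) \ ⋃ i ∈ Finset.range N, f i))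
        Filter.atTop (nhds 0) := by
      have := tendsto_measure_iInter_atTop (μ := nu.prod nu)
        (s := fun N => (⋃ i, f i) \ ⋃ i ∈ Finset.range N, f i)
        (fun N => (hU N).nullMeasurableSet)
        (by
          intro a b hab
          apply Set.sdiff_subset_sdiff_right
          apply Set.biUnion_subset_biUnion_left
          intro i hi
          exact Finset.mem_range.2 (lt_of_lt_of_le (Finset.mem_range.1 hi) hab))
        ⟨0, measure_ne_top _ _⟩
      have he : (⋂ N, (⋃ i, f i) \ ⋃ i ∈ Finset.range N, f i) = ∅ := by
        ext p
        simp only [Set.mem_iInter, Set.mem_sdiff, Set.mem_iUnion, Set.mem_empty_iff_false, iff_false]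
        intro h
        obtain ⟨⟨i, hi⟩, _⟩ := h 0
        exact (h (i + 1)).2 ⟨i, by simp, hi⟩
      rwa [he, measure_empty] at this
    have hlim' := (ENNReal.tendsto_toReal ENNReal.zero_ne_top).comp hlim
    obtain ⟨N, hN⟩ := (hlim'.eventually_lt_const (u := ε) (by simpa using hε)).exists
    refine ⟨_, hpart N, ?_⟩
    have : ip (indK (⋃ i, f i) (MeasurableSet.iUnion hm) - indK (⋃ i ∈ Finset.range N, f i)
        (Finset.measurableSet_biUnion _ fun i _ => hm i))
        (indK (⋃ i, f i) (MeasurableSet.iUnion hm) - indK (⋃ i ∈ Finset.range N, f i)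
        (Finset.measurableSet_biUnion _ fun i _ => hm i)) =
        ((nu.prod nu) ((⋃ i, f i) \ ⋃ i ∈ Finset.range N, f i)).toReal := by
      rw [ip_apply]
      rw [show ((nu.prod nu) ((⋃ i, f i) \ ⋃ i ∈ Finset.range N, f i)).toReal =
        (nu.prod nu).real ((⋃ i, f i) \ ⋃ i ∈ Finset.range N, f i) from rfl]
      rw [← integral_indicator_one (hU N)]
      congr 1; ext p
      show ((⋃ i, f i).indicator (fun _ => (1 : ℝ)) p - (⋃ i ∈ Finset.range N, f i).indicator (fun _ => (1 : ℝ)) p) *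
        ((⋃ i, f i).indicator (fun _ => (1 : ℝ)) p - (⋃ i ∈ Finset.range N, f i).indicator (fun _ => (1 : ℝ)) p) = _
      have hsub : p ∈ (⋃ i ∈ Finset.range N, f i) → p ∈ ⋃ i, f i := fun h =>
        (Set.iUnion₂_subset_iUnion _ _) h
      by_cases h1 : p ∈ ⋃ i, f i <;> by_cases h2 : p ∈ ⋃ i ∈ Finset.range N, f i
      · rw [Set.indicator_of_mem h1, Set.indicator_of_mem h2, Set.indicator_of_notMem (by
          exact fun h => h.2 h2)]; simp
      · rw [Set.indicator_of_mem h1, Set.indicator_of_notMem h2, Set.indicator_of_mem (by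
          exact ⟨h1, h2⟩)]; simp
      · exact absurd (hsub h2) h1
      · rw [Set.indicator_of_notMem h1, Set.indicator_of_notMem h2, Set.indicator_of_notMem (by
          exact fun h => h1 h.1)]; simp
    rw [this]
    exact hN.le

lemma good_all (W : Ker) (hW : SymK W) (M : ℝ) (h0 : 0 < M) (hM : ∀ p, |W.1 p| ≤ M)
    (Q : Ker) : Good W M Q := by
  apply good_close W hW M h0 hM
  intro ε hε
  have hQ : MemLp Q.1 2 (nu.prod nu) := by
    obtain ⟨C, hC⟩ := Q.2.2
    exact MemLp.of_bound Q.2.1.aestronglyMeasurable C (Filter.Eventually.of_forall hC)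
  obtain ⟨g, hg, hgb, hgood⟩ := MemLp.induction_dense (by norm_num : (2 : ENNReal) ≠ ⊤)
    (fun g => ∃ hg : BM g, Good W M ⟨g, hg⟩)
    (by
      intro c s hs _ δ hδ
      refine ⟨s.indicator (fun _ => c), by simp, ?_, ?_⟩
      · refine ⟨measurable_const.indicator hs, |c|, fun a => ?_⟩
        by_cases h : a ∈ s <;> simp [h]
      · have := (good_ind W hW M h0 hM s hs).smul c
        convert this using 1
        apply Subtype.ext; funext p
        show s.indicator (fun _ => c) p = c * s.indicator (fun _ => (1 : ℝ)) p
        by_cases h : p ∈ s <;> simp [h])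
    (by
      rintro f g ⟨hf, hf'⟩ ⟨hg, hg'⟩
      exact ⟨hf.add hg, hf'.add hg'⟩)
    (by
      rintro f ⟨hf, _⟩
      exact hf.1.aestronglyMeasurable) hQ (ε := ENNReal.ofReal (Real.sqrt ε))
      (by simpa using hε)
  refine ⟨_, hgood, ?_⟩
  rw [ip_apply]
  have hb : BM (Q.1 - g) := BM.sub Q.2 hgb
  have hmem : MemLp (Q.1 - g) 2 (nu.prod nu) := by
    obtain ⟨C, hC⟩ := hb.2
    exact MemLp.of_bound hb.1.aestronglyMeasurable C (Filter.Eventually.of_forall hC)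
  have h2 := hmem.eLpNorm_eq_integral_rpow_norm (by norm_num) (by norm_num)
  rw [h2] at hg
  have h3 := (ENNReal.ofReal_le_ofReal_iff (Real.sqrt_nonneg _)).1 hg
  have h4 : (∫ a, ‖(Q.1 - g) a‖ ^ (2 : ENNReal).toReal ∂(nu.prod nu)) =
      ∫ a, (Q.1 - g) a * (Q.1 - g) a ∂(nu.prod nu) := by
    congr 1; ext a
    simp [← sq]
  rw [h4] at h3
  have h5 : (∫ a, (Q.1 - g) a * (Q.1 - g) a ∂(nu.prod nu)) ^ ((2 : ENNReal).toReal)⁻¹ =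
      Real.sqrt (∫ a, (Q.1 - g) a * (Q.1 - g) a ∂(nu.prod nu)) := by
    rw [Real.sqrt_eq_rpow]; norm_num
  rw [h5] at h3
  exact (Real.sqrt_le_sqrt_iff hε.le).1 h3

lemma strong_tendsto (W : Ker) (hW : SymK W) (M : ℝ) (h0 : 0 < M) (hM : ∀ p, |W.1 p| ≤ M) :
    Filter.Tendsto (fun n => ip ((Sop W M ^ n) W) ((Sop W M ^ n) W)) Filter.atTop (nhds 0) := by
  have h := good_all W hW M h0 hM W
  have h2 : Filter.Tendsto (fun n : ℕ => n + n) Filter.atTop Filter.atTop :=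
    Filter.tendsto_atTop_mono (fun n => Nat.le_add_right n n) Filter.tendsto_id
  refine (Filter.Tendsto.comp h h2).congr fun n => ?_
  simp only [Function.comp]
  rw [pow_add, Module.End.mul_apply, Sop_pow_self W hW, ip_comm, Sop_pow_self W hW,
    ← Sop_pow_self W hW]

/-! ## Multigraph densities -/

lemma cons_mp (n : ℕ) : MeasurePreserving
    (fun q : ℝ × (Fin n → ℝ) => (Fin.cons q.1 q.2 : Fin (n + 1) → ℝ))
    (nu.prod (Measure.pi fun _ => nu)) (Measure.pi fun _ => nu) := by
  have := (measurePreserving_piFinSuccAbove (fun _ : Fin (n + 1) => nu) 0).symm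
  convert this using 1
  funext q
  rw [MeasurableEquiv.piFinSuccAbove_symm_apply]
  simp [Fin.insertNthEquiv]

lemma pair_mp {n : ℕ} {u v : Fin n} (h : u ≠ v) : MeasurePreserving
    (fun x : Fin n → ℝ => (x u, x v)) (Measure.pi fun _ => nu) (nu.prod nu) := by
  have hi := ProbabilityTheory.iIndepFun_pi (μ := fun _ : Fin n => nu) (X := fun _ => id)
    (fun _ => aemeasurable_id)
  have h2 : ProbabilityTheory.IndepFun (fun x : Fin n → ℝ => x u) (fun x : Fin n → ℝ => x v)
      (Measure.pi fun _ => nu) := hi.indepFun h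
  rw [ProbabilityTheory.indepFun_iff_map_prod_eq_prod_map_map
    (Measurable.aemeasurable (by fun_prop)) (Measurable.aemeasurable (by fun_prop))] at h2
  refine ⟨by fun_prop, ?_⟩
  have e : ∀ w : Fin n, Measure.map (fun ω : Fin n → ℝ => ω w) (Measure.pi fun _ => nu) = nu :=
    fun w => (measurePreserving_eval (fun _ : Fin n => nu) w).map_eq
  rw [e, e] at h2
  exact h2

/-- product of the kernel over a list of edges -/
def eprod {n : ℕ} (W : Ker) (E : List (Fin n × Fin n)) (x : Fin n → ℝ) : ℝ :=
  (E.map fun e => W.1 (x e.1, x e.2)).prod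

lemma eprod_BM {n : ℕ} (W : Ker) (E : List (Fin n × Fin n)) : BM (eprod W E) :=
  BM.list_prod (f := fun (e : Fin n × Fin n) (x : Fin n → ℝ) => W.1 (x e.1, x e.2)) E
    (fun e => W.2.comp (by fun_prop : Measurable fun x : Fin n → ℝ => (x e.1, x e.2)))

lemma edge_BM {n : ℕ} (K : Ker) (u v : Fin n) : BM (fun x : Fin n → ℝ => K.1 (x u, x v)) :=
  K.2.comp (by fun_prop : Measurable fun x : Fin n → ℝ => (x u, x v))

/-- density of a multigraph -/
def tL {n : ℕ} (W : Ker) (E : List (Fin n × Fin n)) : ℝ :=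
  ∫ x, eprod W E x ∂(Measure.pi fun _ => nu)

/-- density with one edge replaced by another kernel -/
def tE {n : ℕ} (W : Ker) (u v : Fin n) (E : List (Fin n × Fin n)) : Ker →ₗ[ℝ] ℝ where
  toFun K := ∫ x, K.1 (x u, x v) * eprod W E x ∂(Measure.pi fun _ => nu)
  map_add' K L := by
    rw [← integral_add (((edge_BM K u v).mul (eprod_BM W E)).integrable _)
      (((edge_BM L u v).mul (eprod_BM W E)).integrable _)]
    congr 1; ext x
    show (K.1 _ + L.1 _) * _ = _
    ring
  map_smul' c K := by
    rw [RingHom.id_apply, smul_eq_mul, ← integral_const_mul]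
    congr 1; ext x
    show (c * K.1 _) * _ = _
    ring

lemma tE_apply {n : ℕ} (W : Ker) (u v : Fin n) (E : List (Fin n × Fin n)) (K : Ker) :
    tE W u v E K = ∫ x, K.1 (x u, x v) * eprod W E x ∂(Measure.pi fun _ => nu) := rfl

lemma tE_self {n : ℕ} (W : Ker) (u v : Fin n) (E : List (Fin n × Fin n)) :
    tE W u v E W = tL W ((u, v) :: E) := by
  rw [tE_apply, tL]
  simp [eprod]

/-- shift of an edge list -/
def shiftE {n : ℕ} (E : List (Fin n × Fin n)) : List (Fin (n + 1) × Fin (n + 1)) :=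
  E.map (fun e => (e.1.succ, e.2.succ))

lemma tE_Bop {n : ℕ} (W : Ker) (u v : Fin n) (E : List (Fin n × Fin n)) (K : Ker) :
    tE W u v E (Bop W K) = tE W u.succ 0 ((0, v.succ) :: shiftE E) K := by
  rw [tE_apply, tE_apply]
  have hB : BM (fun x : Fin (n + 1) → ℝ =>
      K.1 (x u.succ, x 0) * eprod W ((0, v.succ) :: shiftE E) x) :=
    (edge_BM K _ _).mul (eprod_BM W _)
  rw [← (cons_mp n).map_eq, integral_map (cons_mp n).measurable.aemeasurable
    hB.1.aestronglyMeasurable]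
  rw [integral_prod_symm _ ((hB.comp (cons_mp n).measurable).integrable _)]
  congr 1; ext x
  rw [Bop_apply, ← integral_mul_const]
  congr 1; ext z
  simp [eprod, shiftE, List.map_map, Function.comp_def]
  ring

lemma tE_tendsto {n : ℕ} (W : Ker) (hW : SymK W) (M : ℝ) (h0 : 0 < M) (hM : ∀ p, |W.1 p| ≤ M)
    (u v : Fin n) (huv : u ≠ v) (E : List (Fin n × Fin n)) :
    Filter.Tendsto (fun k => tE W u v E ((Sop W M ^ k) W)) Filter.atTop (nhds 0) := by
  have hb := (strong_tendsto W hW M h0 hM).mul_const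
    (∫ x, eprod W E x * eprod W E x ∂(Measure.pi fun _ => nu))
  rw [zero_mul] at hb
  have hle : ∀ k, (tE W u v E ((Sop W M ^ k) W)) ^ 2 ≤
      ip ((Sop W M ^ k) W) ((Sop W M ^ k) W) *
        (∫ x, eprod W E x * eprod W E x ∂(Measure.pi fun _ => nu)) := by
    intro k
    set K := (Sop W M ^ k) W
    rw [tE_apply, ip_apply]
    have := BM.cauchy (edge_BM K u v) (eprod_BM W E) (Measure.pi fun _ => nu)
    have h2 : ∫ p, K.1 p * K.1 p ∂(nu.prod nu) =
        ∫ x : Fin n → ℝ, K.1 (x u, x v) * K.1 (x u, x v) ∂(Measure.pi fun _ => nu) := by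
      rw [← (pair_mp huv).map_eq, integral_map (pair_mp huv).measurable.aemeasurable
        (K.2.mul K.2).1.aestronglyMeasurable]
    rw [h2]
    exact this
  have hsq := squeeze_zero (fun k => sq_nonneg (tE W u v E ((Sop W M ^ k) W))) hle hb
  have := hsq.sqrt
  simp only [Real.sqrt_sq_eq_abs, Real.sqrt_zero] at this
  exact (tendsto_zero_iff_abs_tendsto_zero _).2 this

lemma analytic_eq (W U : Ker) (M : ℝ) (lW lU : Ker →ₗ[ℝ] ℝ)
    (hk : ∀ k, lW ((Bop W)^[k + 1] W) = lU ((Bop U)^[k + 1] U))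
    (hlW : Filter.Tendsto (fun k => lW ((Sop W M ^ k) W)) Filter.atTop (nhds 0))
    (hlU : Filter.Tendsto (fun k => lU ((Sop U M ^ k) U)) Filter.atTop (nhds 0)) :
    lW W = lU U := by
  have hlin : ∀ (V K L : Ker) (c : ℝ) (j : ℕ),
      (Bop V)^[j] (K - c • L) = (Bop V)^[j] K - c • (Bop V)^[j] L := by
    intro V K L c j
    induction j with
    | zero => rfl
    | succ j ih =>
      rw [Function.iterate_succ_apply', Function.iterate_succ_apply',
        Function.iterate_succ_apply', ih, map_sub, map_smul]
  have hexp : ∀ (V : Ker) (n j : ℕ), (Bop V)^[j] ((Sop V M ^ (n + 1)) V) =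
      (Bop V)^[j] ((Sop V M ^ n) V) - (M ^ 2)⁻¹ • (Bop V)^[j + 2] ((Sop V M ^ n) V) := by
    intro V n j
    rw [pow_succ', Module.End.mul_apply, Sop_apply, hlin]
    rfl
  have h1 : ∀ n k, lW ((Bop W)^[k + 1] ((Sop W M ^ n) W)) =
      lU ((Bop U)^[k + 1] ((Sop U M ^ n) U)) := by
    intro n
    induction n with
    | zero => exact hk
    | succ n ih =>
      intro k
      rw [hexp, hexp, map_sub, map_sub, map_smul, map_smul, ih k, ih (k + 2)]
  have h2 : ∀ n, lW ((Sop W M ^ n) W) - lU ((Sop U M ^ n) U) = lW W - lU U := by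
    intro n
    induction n with
    | zero => rfl
    | succ n ih =>
      have e1 := hexp W n 0
      have e2 := hexp U n 0
      simp only [Function.iterate_zero, id_eq, zero_add] at e1 e2
      rw [e1, e2, map_sub, map_sub, map_smul, map_smul, h1 n 1, ← ih]
      ring
  have h3 := hlW.sub hlU
  simp only [h2, sub_zero] at h3
  have := tendsto_nhds_unique h3 tendsto_const_nhds
  linarith

/-- simple edge lists -/
def SimpleL {n : ℕ} (E : List (Fin n × Fin n)) : Prop :=
  (E.map fun e => s(e.1, e.2)).Nodup ∧ ∀ e ∈ E, e.1 ≠ e.2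

lemma tL_simple {n : ℕ} (E : List (Fin n × Fin n)) (hE : SimpleL E) :
    ∃ F : SimpleGraph (Fin n), ∀ W : Ker, SymK W →
      tL W E = homDensity F (fun x y => W.1 (x, y)) := by
  refine ⟨SimpleGraph.fromEdgeSet {e | e ∈ E.map fun e => s(e.1, e.2)}, fun W hW => ?_⟩
  unfold tL homDensity
  rw [cube_measure]
  congr 1; ext x
  let w : Sym2 (Fin n) → ℝ := Sym2.lift ⟨fun a b => W.1 (x a, x b), fun a b => hW _ _⟩
  have h1 : eprod W E x = ∏ e ∈ (E.map fun e => s(e.1, e.2)).toFinset, w e := by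
    rw [List.prod_toFinset _ hE.1, List.map_map]
    rfl
  rw [h1]
  symm
  refine Finset.prod_nbij (fun p => s(p.1, p.2)) ?_ ?_ ?_ ?_
  · intro p hp
    simp only [Finset.mem_filter, SimpleGraph.fromEdgeSet_adj, Set.mem_ofPred_eq] at hp
    exact List.mem_toFinset.2 hp.2.2.1
  · intro p hp q hq hpq
    simp only [Finset.coe_filter, Set.mem_ofPred_eq] at hp hq
    simp only [Sym2.eq_iff] at hpq
    rcases hpq with h | h
    · exact Prod.ext h.1 h.2
    · exfalso
      have h1 := hp.2.1
      have h2 := hq.2.1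
      rw [h.1, h.2] at h1
      exact lt_asymm h1 h2
  · intro e he
    have he' := List.mem_toFinset.1 he
    obtain ⟨p, hp, rfl⟩ := List.mem_map.1 he'
    have hne := hE.2 p hp
    rcases lt_or_gt_of_ne hne with h | h
    · refine ⟨p, ?_, rfl⟩
      simp only [Finset.coe_filter, Set.mem_ofPred_eq, SimpleGraph.fromEdgeSet_adj]
      exact ⟨Finset.mem_univ _, h, he', hne⟩
    · refine ⟨(p.2, p.1), ?_, Sym2.eq_swap⟩
      simp only [Finset.coe_filter, Set.mem_ofPred_eq, SimpleGraph.fromEdgeSet_adj]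
      refine ⟨Finset.mem_univ _, h, ?_, hne.symm⟩
      rw [Sym2.eq_swap]; exact he'
  · intro p _
    rfl

lemma SimpleL.shift {n : ℕ} {E : List (Fin n × Fin n)} (hE : SimpleL E) : SimpleL (shiftE E) := by
  constructor
  · have := hE.1.map (Sym2.map.injective (Fin.succ_injective n))
    rw [List.map_map] at this
    unfold shiftE
    rw [List.map_map]
    exact this
  · intro e he
    obtain ⟨p, hp, rfl⟩ := List.mem_map.1 he
    simpa using hE.2 p hp

lemma tL_perm {n : ℕ} (W : Ker) {E E' : List (Fin n × Fin n)} (h : E.Perm E') :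
    tL W E = tL W E' := by
  unfold tL eprod
  congr 1; ext x
  exact (h.map _).prod_eq

lemma tE_perm {n : ℕ} (W K : Ker) (u v : Fin n) {E E' : List (Fin n × Fin n)} (h : E.Perm E') :
    tE W u v E K = tE W u v E' K := by
  rw [tE_apply, tE_apply]
  unfold eprod
  congr 1; ext x
  rw [(h.map _).prod_eq]

theorem multi_eq (W U : Ker) (hW : SymK W) (hU : SymK U)
    (hWU : WeaklyIsomorphic (fun x y => W.1 (x, y)) (fun x y => U.1 (x, y))) (m : ℕ) :
    ∀ (n : ℕ) (D E : List (Fin n × Fin n)), D.length = m → (∀ e ∈ D, e.1 ≠ e.2) → SimpleL E →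
      tL W (D ++ E) = tL U (D ++ E) := by
  obtain ⟨C, hC⟩ := W.2.2
  obtain ⟨C', hC'⟩ := U.2.2
  set M : ℝ := |C| + |C'| + 1
  have h0 : 0 < M := by positivity
  have hMW : ∀ p, |W.1 p| ≤ M := fun p => (hC p).trans (by
    have := le_abs_self C; have := abs_nonneg C'; simp only [M]; linarith)
  have hMU : ∀ p, |U.1 p| ≤ M := fun p => (hC' p).trans (by
    have := le_abs_self C'; have := abs_nonneg C; simp only [M]; linarith)
  induction m with
  | zero =>
    intro n D E hD _ hE
    rw [List.length_eq_zero_iff.1 hD, List.nil_append]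
    obtain ⟨F, hF⟩ := tL_simple E hE
    rw [hF W hW, hF U hU, hWU n F]
  | succ m ih =>
    have hZ : ∀ (k n : ℕ) (u v : Fin n) (D E : List (Fin n × Fin n)), D.length = m →
        (∀ e ∈ D, e.1 ≠ e.2) → SimpleL ((u, v) :: E) →
        tE W u v (D ++ E) ((Bop W)^[k] W) = tE U u v (D ++ E) ((Bop U)^[k] U) := by
      intro k
      have step : ∀ (n : ℕ) (u v : Fin n) (E : List (Fin n × Fin n)), u ≠ v → SimpleL E →
          SimpleL ((u.succ, 0) :: (0, v.succ) :: shiftE E) := by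
        intro n u v E huv hE
        refine ⟨?_, ?_⟩
        · simp only [List.map_cons, List.nodup_cons]
          refine ⟨?_, ?_, hE.shift.1⟩
          · rw [List.mem_cons, not_or]
            refine ⟨?_, ?_⟩
            · simp [huv]
            · simp [shiftE, Fin.ext_iff]
          · simp [shiftE, Fin.ext_iff]
        · intro e he
          rcases List.mem_cons.1 he with rfl | he
          · simp
          rcases List.mem_cons.1 he with rfl | he
          · simp [Fin.ext_iff]
          · exact hE.shift.2 e he
      induction k with
      | zero =>
        intro n u v D E hD hDl hE
        simp only [Function.iterate_zero, id_eq]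
        rw [tE_self, tE_self]
        have hp : ((u, v) :: (D ++ E)).Perm (D ++ ((u, v) :: E)) := List.perm_middle.symm
        rw [tL_perm W hp, tL_perm U hp]
        exact ih n D _ hD hDl hE
      | succ k ihk =>
        intro n u v D E hD hDl hE
        rw [Function.iterate_succ_apply', Function.iterate_succ_apply', tE_Bop, tE_Bop]
        have hE' : SimpleL E := ⟨(List.nodup_cons.1 hE.1).2, fun e he =>
          hE.2 e (List.mem_cons_of_mem _ he)⟩
        have huv : u ≠ v := hE.2 (u, v) List.mem_cons_self
        have hp : ((0, v.succ) :: shiftE (D ++ E)).Perm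
            (shiftE D ++ ((0, v.succ) :: shiftE E)) := by
          unfold shiftE
          rw [List.map_append]
          exact List.perm_middle.symm
        rw [tE_perm _ _ _ _ hp, tE_perm _ _ _ _ hp]
        refine ihk (n + 1) u.succ 0 (shiftE D) _ (by simpa [shiftE] using hD) ?_
          (step n u v E huv hE')
        intro e he
        obtain ⟨p, hp, rfl⟩ := List.mem_map.1 he
        simpa using hDl p hp
    intro n D E hD hDl hE
    match D, hD, hDl with
    | (u, v) :: D, hD, hDl =>
    have huv : u ≠ v := hDl (u, v) List.mem_cons_self
    have hDl' : ∀ e ∈ D, e.1 ≠ e.2 := fun e he => hDl e (List.mem_cons_of_mem _ he)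
    have hD' : D.length = m := by simpa using hD
    rw [List.cons_append, ← tE_self, ← tE_self]
    refine analytic_eq W U M _ _ ?_ (tE_tendsto W hW M h0 hMW u v huv _)
      (tE_tendsto U hU M h0 hMU u v huv _)
    intro k
    rw [Function.iterate_succ_apply', Function.iterate_succ_apply', tE_Bop, tE_Bop]
    have hp : ((0, v.succ) :: shiftE (D ++ E)).Perm
        (shiftE D ++ ((0, v.succ) :: shiftE E)) := by
      unfold shiftE
      rw [List.map_append]
      exact List.perm_middle.symm
    rw [tE_perm _ _ _ _ hp, tE_perm _ _ _ _ hp]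
    refine hZ k (n + 1) u.succ 0 (shiftE D) _ (by simpa [shiftE] using hD') ?_ ?_
    · intro e he
      obtain ⟨p, hp, rfl⟩ := List.mem_map.1 he
      simpa using hDl' p hp
    · refine ⟨?_, ?_⟩
      · simp only [List.map_cons, List.nodup_cons]
        refine ⟨?_, ?_, hE.shift.1⟩
        · rw [List.mem_cons, not_or]
          refine ⟨?_, ?_⟩
          · simp [huv]
          · simp [shiftE, Fin.ext_iff]
        · simp [shiftE, Fin.ext_iff]
      · intro e he
        rcases List.mem_cons.1 he with rfl | he
        · simp
        rcases List.mem_cons.1 he with rfl | he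
        · simp [Fin.ext_iff]
        · exact hE.shift.2 e he

theorem multi_eq' (W U : Ker) (hW : SymK W) (hU : SymK U)
    (hWU : WeaklyIsomorphic (fun x y => W.1 (x, y)) (fun x y => U.1 (x, y)))
    {n : ℕ} (D : List (Fin n × Fin n)) (hD : ∀ e ∈ D, e.1 ≠ e.2) : tL W D = tL U D := by
  have := multi_eq W U hW hU hWU D.length n D [] rfl hD ⟨by simp, by simp⟩
  simpa using this

/-! ## Truncation, and the forward direction -/

lemma meas_I01 : MeasurableSet I01 := measurableSet_Icc

/-- zero extension of a kernel -/
def truncK (W : ℝ → ℝ → ℝ) (hW : memW W) : Ker :=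
  ⟨fun p => if p.1 ∈ I01 ∧ p.2 ∈ I01 then W p.1 p.2 else 0, by
    refine ⟨?_, ?_⟩
    · refine Measurable.ite ?_ hW.1 measurable_const
      exact (measurable_fst meas_I01).inter (measurable_snd meas_I01)
    · obtain ⟨C, hC⟩ := hW.2.2
      refine ⟨|C|, fun p => ?_⟩
      show |if p.1 ∈ I01 ∧ p.2 ∈ I01 then W p.1 p.2 else 0| ≤ |C|
      split_ifs with h
      · exact (hC _ h.1 _ h.2).trans (le_abs_self _)
      · simp⟩

lemma truncK_of_mem (W : ℝ → ℝ → ℝ) (hW : memW W) {x y : ℝ} (hx : x ∈ I01) (hy : y ∈ I01) :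
    (truncK W hW).1 (x, y) = W x y := by
  show (if x ∈ I01 ∧ y ∈ I01 then W x y else 0) = _
  simp [hx, hy]

lemma truncK_sym (W : ℝ → ℝ → ℝ) (hW : memW W) : SymK (truncK W hW) := by
  intro x y
  show (if x ∈ I01 ∧ y ∈ I01 then W x y else 0) = (if y ∈ I01 ∧ x ∈ I01 then W y x else 0)
  by_cases h : x ∈ I01 ∧ y ∈ I01
  · rw [if_pos h, if_pos h.symm, hW.2.1 x h.1 y h.2]
  · rw [if_neg h, if_neg (fun h' => h h'.symm)]

lemma meas_cube (n : ℕ) : MeasurableSet (cube n) :=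
  MeasurableSet.univ_pi fun _ => meas_I01

lemma truncK_cube (W : ℝ → ℝ → ℝ) (hW : memW W) {n : ℕ} {x : Fin n → ℝ} (hx : x ∈ cube n)
    (i j : Fin n) : (truncK W hW).1 (x i, x j) = W (x i) (x j) :=
  truncK_of_mem W hW (hx i (Set.mem_univ _)) (hx j (Set.mem_univ _))

lemma homDensity_trunc (W : ℝ → ℝ → ℝ) (hW : memW W) {n : ℕ} (F : SimpleGraph (Fin n)) :
    homDensity F (fun x y => (truncK W hW).1 (x, y)) = homDensity F W := by
  unfold homDensity
  refine setIntegral_congr_fun (meas_cube n) fun x hx => ?_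
  exact Finset.prod_congr rfl fun p _ => truncK_cube W hW hx _ _

lemma MonotoneDecr01.memW {U : ℝ → ℝ → ℝ} (hU : MonotoneDecr01 U) : memW U := by
  refine ⟨hU.1, hU.2.1, 1, fun x hx y hy => ?_⟩
  rcases hU.2.2.1 x hx y hy with h | h <;> simp [h]

/-- the four-cycle expression -/
def c4 (K : Ker) (x : Fin 4 → ℝ) : ℝ :=
  K.1 (x 0, x 1) * (1 - K.1 (x 1, x 2)) * K.1 (x 2, x 3) * (1 - K.1 (x 3, x 0))

lemma c4_trunc (W : ℝ → ℝ → ℝ) (hW : memW W) {x : Fin 4 → ℝ} (hx : x ∈ cube 4) :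
    c4 (truncK W hW) x =
      W (x 0) (x 1) * (1 - W (x 1) (x 2)) * W (x 2) (x 3) * (1 - W (x 3) (x 0)) := by
  unfold c4
  simp only [truncK_cube W hW hx]

lemma c4_BM (K : Ker) : BM (c4 K) :=
  (((edge_BM K _ _).mul ((BM.const 1).sub (edge_BM K _ _))).mul (edge_BM K _ _)).mul
    ((BM.const 1).sub (edge_BM K _ _))

lemma integral_c4 (K : Ker) : ∫ x, c4 K x ∂(Measure.pi fun _ => nu) =
    tL K [((0 : Fin 4), 1), (2, 3)] - tL K [((0 : Fin 4), 1), (1, 2), (2, 3)]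
      - tL K [((0 : Fin 4), 1), (2, 3), (3, 0)] + tL K [((0 : Fin 4), 1), (1, 2), (2, 3), (3, 0)] := by
  unfold tL
  rw [← integral_sub ((eprod_BM _ _).integrable _) ((eprod_BM _ _).integrable _),
    ← integral_sub (((eprod_BM _ _).sub (eprod_BM _ _)).integrable _) ((eprod_BM _ _).integrable _),
    ← integral_add ((((eprod_BM _ _).sub (eprod_BM _ _)).sub (eprod_BM _ _)).integrable _)
      ((eprod_BM _ _).integrable _)]
  congr 1; ext x
  simp [c4, eprod]
  ring

lemma integral_01 (K : Ker) :
    ∫ p, (K.1 p - K.1 p * K.1 p) * (K.1 p - K.1 p * K.1 p) ∂(nu.prod nu) =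
    tL K [((0 : Fin 2), 1), (0, 1)] - 2 * tL K [((0 : Fin 2), 1), (0, 1), (0, 1)]
      + tL K [((0 : Fin 2), 1), (0, 1), (0, 1), (0, 1)] := by
  have hb : BM (fun p => K.1 p - K.1 p * K.1 p) := K.2.sub (K.2.mul K.2)
  have h01 : (0 : Fin 2) ≠ 1 := by decide
  rw [← (pair_mp h01).map_eq, integral_map (pair_mp h01).measurable.aemeasurable
        (hb.mul hb).1.aestronglyMeasurable]
  unfold tL
  rw [← integral_const_mul, ← integral_sub ((eprod_BM _ _).integrable _)
      (((BM.const _).mul (eprod_BM _ _)).integrable _),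
    ← integral_add (((eprod_BM _ _).sub ((BM.const _).mul (eprod_BM _ _))).integrable _)
      ((eprod_BM _ _).integrable _)]
  congr 1; ext x
  simp [eprod]
  ring

lemma mono_c4 (U : ℝ → ℝ → ℝ) (hU : MonotoneDecr01 U) {a b c d : ℝ} (ha : a ∈ I01) (hb : b ∈ I01)
    (hc : c ∈ I01) (hd : d ∈ I01) : U a b * (1 - U b c) * U c d * (1 - U d a) = 0 := by
  obtain ⟨_, hs, h01, hm⟩ := hU
  rcases h01 a ha b hb with h1 | h1
  · simp [h1]
  rcases h01 c hc d hd with h2 | h2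
  · simp [h2]
  rcases le_total a c with h | h
  · have := hm a c d d ha hc hd hd h le_rfl
    rw [hs d hd a ha]
    rcases h01 a ha d hd with h3 | h3
    · linarith
    · simp [h3]
  · have := hm c a b b hc ha hb hb h le_rfl
    rw [hs b hb c hc]
    rcases h01 c hc b hb with h3 | h3
    · linarith
    · simp [h3]

lemma ae_cube (n : ℕ) : ∀ᵐ x ∂(Measure.pi fun _ : Fin n => nu), x ∈ cube n := by
  rw [← cube_measure]
  exact ae_restrict_mem (meas_cube n)

lemma ae_pair {n : ℕ} {i j : Fin n} (h : i ≠ j) {p : ℝ × ℝ → Prop}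
    (hp : ∀ᵐ q ∂(nu.prod nu), p q) : ∀ᵐ x ∂(Measure.pi fun _ : Fin n => nu), p (x i, x j) :=
  (pair_mp h).quasiMeasurePreserving.ae hp

theorem forward (W : ℝ → ℝ → ℝ) (hW : memW W) (U : ℝ → ℝ → ℝ) (hU : MonotoneDecr01 U)
    (h : WeaklyIsomorphic W U) : ∀ᵐ x ∂(volume.restrict (cube 4)),
        W (x 0) (x 1) * (1 - W (x 1) (x 2)) * W (x 2) (x 3) * (1 - W (x 3) (x 0)) = 0 := by
  set K := truncK W hW with hK
  set L := truncK U hU.memW with hL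
  have hKL : WeaklyIsomorphic (fun x y => K.1 (x, y)) (fun x y => L.1 (x, y)) := by
    intro n F
    rw [hK, hL, homDensity_trunc, homDensity_trunc, h n F]
  have hm := fun {n : ℕ} (D : List (Fin n × Fin n)) (hD : ∀ e ∈ D, e.1 ≠ e.2) =>
    multi_eq' K L (truncK_sym _ _) (truncK_sym _ _) hKL D hD
  have hL01 : ∀ p, L.1 p = 0 ∨ L.1 p = 1 := by
    intro p
    by_cases hp : p.1 ∈ I01 ∧ p.2 ∈ I01
    · have := truncK_of_mem U hU.memW hp.1 hp.2
      rw [hL, this]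
      exact hU.2.2.1 _ hp.1 _ hp.2
    · left
      show (if p.1 ∈ I01 ∧ p.2 ∈ I01 then U p.1 p.2 else 0) = 0
      rw [if_neg hp]
  have h1 : ∫ p, (K.1 p - K.1 p * K.1 p) * (K.1 p - K.1 p * K.1 p) ∂(nu.prod nu) = 0 := by
    rw [integral_01, hm _ (by decide), hm _ (by decide), hm _ (by decide), ← integral_01]
    refine integral_eq_zero_of_ae (Filter.Eventually.of_forall fun p => ?_)
    rcases hL01 p with h | h <;> simp [h]
  have hb : BM (fun p => K.1 p - K.1 p * K.1 p) := K.2.sub (K.2.mul K.2)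
  have h2 : ∀ᵐ p ∂(nu.prod nu), K.1 p = 0 ∨ K.1 p = 1 := by
    rw [integral_eq_zero_iff_of_nonneg (fun p => mul_self_nonneg _)
      ((hb.mul hb).integrable _)] at h1
    filter_upwards [h1] with p hp
    have h3 : K.1 p - K.1 p * K.1 p = 0 := mul_self_eq_zero.1 hp
    have h4 : K.1 p * (1 - K.1 p) = 0 := by linarith
    rcases mul_eq_zero.1 h4 with h | h
    · exact Or.inl h
    · right; linarith
  have h3 : ∫ x, c4 K x ∂(Measure.pi fun _ => nu) = 0 := by
    rw [integral_c4, hm _ (by decide), hm _ (by decide), hm _ (by decide), hm _ (by decide),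
      ← integral_c4]
    refine integral_eq_zero_of_ae ?_
    filter_upwards [ae_cube 4] with x hx
    rw [hL, c4_trunc U hU.memW hx]
    exact mono_c4 U hU (hx 0 trivial) (hx 1 trivial) (hx 2 trivial) (hx 3 trivial)
  rw [integral_eq_zero_iff_of_nonneg_ae _ ((c4_BM K).integrable _)] at h3
  · rw [cube_measure]
    filter_upwards [h3, ae_cube 4] with x hx hxc
    rw [← c4_trunc W hW hxc]
    exact hx
  · filter_upwards [ae_pair (n := 4) (i := 0) (j := 1) (by decide) h2,
      ae_pair (n := 4) (i := 1) (j := 2) (by decide) h2,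
      ae_pair (n := 4) (i := 2) (j := 3) (by decide) h2,
      ae_pair (n := 4) (i := 3) (j := 0) (by decide) h2] with x a b c d
    show 0 ≤ c4 K x
    unfold c4
    rcases a with a | a <;> rcases b with b | b <;> rcases c with c | c <;> rcases d with d | d <;>
      simp [a, b, c, d]

/-! ## Backward direction -/

lemma ae_or {p q : ℝ → Prop} (h : ∀ᵐ z ∂(nu.prod nu), ¬(p z.1 ∧ q z.2)) :
    (∀ᵐ a ∂nu, ¬p a) ∨ ∀ᵐ b ∂nu, ¬q b := by
  have h1 : (nu.prod nu) ({a | p a} ×ˢ {b | q b}) = 0 := by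
    rw [ae_iff] at h
    refine measure_mono_null (fun z hz => ?_) h
    simpa using hz
  rw [Measure.prod_prod, mul_eq_zero] at h1
  rcases h1 with h1 | h1
  · left; rw [ae_iff]; simpa using h1
  · right; rw [ae_iff]; simpa using h1

lemma four_mp : MeasurePreserving
    (fun z : (ℝ × ℝ) × (ℝ × ℝ) => (![z.1.1, z.2.1, z.1.2, z.2.2] : Fin 4 → ℝ))
    ((nu.prod nu).prod (nu.prod nu)) (Measure.pi fun _ : Fin 4 => nu) := by
  have hm : Measurable
      (fun z : (ℝ × ℝ) × (ℝ × ℝ) => (![z.1.1, z.2.1, z.1.2, z.2.2] : Fin 4 → ℝ)) := by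
    refine measurable_pi_iff.2 fun i => ?_
    fin_cases i <;> simp <;> fun_prop
  refine ⟨hm, (Measure.pi_eq fun s hs => ?_).symm⟩
  rw [Measure.map_apply hm (MeasurableSet.univ_pi hs)]
  have : ((fun z : (ℝ × ℝ) × (ℝ × ℝ) => (![z.1.1, z.2.1, z.1.2, z.2.2] : Fin 4 → ℝ)) ⁻¹'
      (Set.univ.pi s)) = (s 0 ×ˢ s 2) ×ˢ (s 1 ×ˢ s 3) := by
    ext z
    simp [Fin.forall_fin_succ]
    tauto
  rw [this, Measure.prod_prod, Measure.prod_prod, Measure.prod_prod, Fin.prod_univ_four]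
  ring

lemma star (K : Ker) (h : ∀ᵐ x ∂(Measure.pi fun _ => nu), c4 K x = 0) :
    ∀ᵐ p ∂(nu.prod nu), (∀ᵐ z ∂nu, K.1 (p.1, z) * (1 - K.1 (z, p.2)) = 0) ∨
      (∀ᵐ z ∂nu, K.1 (p.2, z) * (1 - K.1 (z, p.1)) = 0) := by
  have h1 := Measure.ae_ae_of_ae_prod (four_mp.quasiMeasurePreserving.ae h)
  filter_upwards [h1] with p hp
  have := ae_or (p := fun z => K.1 (p.1, z) * (1 - K.1 (z, p.2)) ≠ 0)
    (q := fun z => K.1 (p.2, z) * (1 - K.1 (z, p.1)) ≠ 0) (by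
      filter_upwards [hp] with z hz hz'
      apply mul_ne_zero hz'.1 hz'.2
      simp [c4] at hz
      simp
      tauto)
  simpa only [not_not, ne_eq] using this

lemma swap3 {P : (ℝ × ℝ) × ℝ → Prop} (hP : MeasurableSet {q | P q})
    (h : ∀ᵐ p ∂(nu.prod nu), ∀ᵐ z ∂nu, P (p, z)) :
    ∀ᵐ z ∂nu, ∀ᵐ p ∂(nu.prod nu), P (p, z) :=
  (Measure.ae_ae_comm (p := fun p z => P (p, z)) hP).1 h

lemma K01 (K : Ker) (hK : SymK K) (h : ∀ᵐ x ∂(Measure.pi fun _ => nu), c4 K x = 0) :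
    ∀ᵐ p ∂(nu.prod nu), K.1 p = 0 ∨ K.1 p = 1 := by
  have hKm : Measurable K.1 := K.2.1
  have h1 : ∀ᵐ p ∂(nu.prod nu), ∀ᵐ z ∂nu,
      (fun q : (ℝ × ℝ) × ℝ => ¬ ((K.1 (q.2, q.1.1) ≠ 0 ∧ K.1 (q.2, q.1.1) ≠ 1) ∧
        (K.1 (q.2, q.1.2) ≠ 0 ∧ K.1 (q.2, q.1.2) ≠ 1))) (p, z) := by
    filter_upwards [star K h] with p hp
    rcases hp with hp | hp
    · filter_upwards [hp] with z hz
      rw [hK p.1 z] at hz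
      rintro ⟨⟨a, b⟩, c, d⟩
      exact mul_ne_zero a (sub_ne_zero.2 (Ne.symm d)) hz
    · filter_upwards [hp] with z hz
      rw [hK p.2 z] at hz
      rintro ⟨⟨a, b⟩, c, d⟩
      exact mul_ne_zero c (sub_ne_zero.2 (Ne.symm b)) hz
  have m1 : Measurable fun q : (ℝ × ℝ) × ℝ => K.1 (q.2, q.1.1) := by fun_prop
  have m2 : Measurable fun q : (ℝ × ℝ) × ℝ => K.1 (q.2, q.1.2) := by fun_prop
  have e (f : (ℝ × ℝ) × ℝ → ℝ) (hf : Measurable f) (c : ℝ) : MeasurableSet {q | f q = c} :=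
    hf (measurableSet_singleton c)
  have h2 := swap3 (by
    exact (((e _ m1 0).compl.inter (e _ m1 1).compl).inter
      ((e _ m2 0).compl.inter (e _ m2 1).compl)).compl) h1
  have m3 : MeasurableSet {p : ℝ × ℝ | K.1 p = 0 ∨ K.1 p = 1} :=
    (hKm (measurableSet_singleton 0)).union (hKm (measurableSet_singleton 1))
  rw [Measure.ae_prod_iff_ae_ae m3]
  filter_upwards [h2] with z hz
  have := ae_or (p := fun x => K.1 (z, x) ≠ 0 ∧ K.1 (z, x) ≠ 1)
    (q := fun x => K.1 (z, x) ≠ 0 ∧ K.1 (z, x) ≠ 1) hz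
  rw [or_self] at this
  filter_upwards [this] with x hx
  tauto

/-- degree function -/
def dg (K : Ker) (x : ℝ) : ℝ := nu.real {y | K.1 (x, y) = 1}

lemma dg_meas (K : Ker) : Measurable (dg K) := by
  have : MeasurableSet {p : ℝ × ℝ | K.1 p = 1} := K.2.1 (measurableSet_singleton 1)
  exact (measurable_measure_prodMk_left (ν := nu) this).ennreal_toReal

lemma dg_nonneg (K : Ker) (x : ℝ) : 0 ≤ dg K x := measureReal_nonneg

lemma dg_le (K : Ker) (x : ℝ) : dg K x ≤ 1 := measureReal_le_one

lemma nest_aux {s t : Set ℝ} (ht : MeasurableSet t) (hs : MeasurableSet s)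
    (h : (∀ᵐ z ∂nu, z ∈ s → z ∈ t) ∨ (∀ᵐ z ∂nu, z ∈ t → z ∈ s)) (hle : nu.real t ≤ nu.real s) :
    ∀ᵐ z ∂nu, z ∈ t → z ∈ s := by
  rcases h with h | h
  · have hle' : nu t ≤ nu s := by
      rwa [measureReal_def, measureReal_def, ENNReal.toReal_le_toReal (measure_ne_top _ _)
        (measure_ne_top _ _)] at hle
    have := ae_eq_of_ae_subset_of_measure_ge (μ := nu) h hle' hs.nullMeasurableSet (measure_ne_top _ _)
    exact this.symm.le
  · exact h

lemma nest (K : Ker) (hK : SymK K) (h : ∀ᵐ x ∂(Measure.pi fun _ => nu), c4 K x = 0) :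
    ∀ᵐ z ∂nu, ∀ᵐ x ∂nu, ∀ᵐ x' ∂nu,
      (dg K x' ≤ dg K x → K.1 (x', z) = 1 → K.1 (x, z) = 1) ∧
      (dg K x ≤ dg K x' → K.1 (x, z) = 1 → K.1 (x', z) = 1) := by
  have hKm : Measurable K.1 := K.2.1
  have hd := dg_meas K
  have hs (x : ℝ) : MeasurableSet {y | K.1 (x, y) = 1} := by
    have : Measurable fun y => K.1 (x, y) := by fun_prop
    exact this (measurableSet_singleton 1)
  have h1 : ∀ᵐ p ∂(nu.prod nu), ∀ᵐ z ∂nu,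
      (fun q : (ℝ × ℝ) × ℝ =>
        (dg K q.1.2 ≤ dg K q.1.1 → K.1 (q.1.2, q.2) = 1 → K.1 (q.1.1, q.2) = 1) ∧
        (dg K q.1.1 ≤ dg K q.1.2 → K.1 (q.1.1, q.2) = 1 → K.1 (q.1.2, q.2) = 1)) (p, z) := by
    filter_upwards [star K h] with p hp
    have hp1 : (∀ᵐ z ∂nu, z ∈ {y | K.1 (p.1, y) = 1} → z ∈ {y | K.1 (p.2, y) = 1}) ∨
        (∀ᵐ z ∂nu, z ∈ {y | K.1 (p.2, y) = 1} → z ∈ {y | K.1 (p.1, y) = 1}) := by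
      refine hp.imp (fun hp => ?_) (fun hp => ?_)
      · filter_upwards [hp] with z hz (h1 : K.1 (p.1, z) = 1)
        rw [h1, hK z] at hz
        show K.1 (p.2, z) = 1
        linarith
      · filter_upwards [hp] with z hz (h1 : K.1 (p.2, z) = 1)
        rw [h1, hK z] at hz
        show K.1 (p.1, z) = 1
        linarith
    have a1 : dg K p.2 ≤ dg K p.1 → ∀ᵐ z ∂nu, K.1 (p.2, z) = 1 → K.1 (p.1, z) = 1 :=
      fun hle => nest_aux (hs _) (hs _) hp1 hle
    have a2 : dg K p.1 ≤ dg K p.2 → ∀ᵐ z ∂nu, K.1 (p.1, z) = 1 → K.1 (p.2, z) = 1 :=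
      fun hle => nest_aux (hs _) (hs _) hp1.symm hle
    have a1' : ∀ᵐ z ∂nu, dg K p.2 ≤ dg K p.1 → K.1 (p.2, z) = 1 → K.1 (p.1, z) = 1 := by
      by_cases hc : dg K p.2 ≤ dg K p.1
      · filter_upwards [a1 hc] with z hz _ using hz
      · exact Filter.Eventually.of_forall fun z hz => absurd hz hc
    have a2' : ∀ᵐ z ∂nu, dg K p.1 ≤ dg K p.2 → K.1 (p.1, z) = 1 → K.1 (p.2, z) = 1 := by
      by_cases hc : dg K p.1 ≤ dg K p.2
      · filter_upwards [a2 hc] with z hz _ using hz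
      · exact Filter.Eventually.of_forall fun z hz => absurd hz hc
    exact a1'.and a2'
  have m1 : Measurable fun q : (ℝ × ℝ) × ℝ => K.1 (q.1.1, q.2) := by fun_prop
  have m2 : Measurable fun q : (ℝ × ℝ) × ℝ => K.1 (q.1.2, q.2) := by fun_prop
  have m3 : Measurable fun q : (ℝ × ℝ) × ℝ => dg K q.1.1 := by fun_prop
  have m4 : Measurable fun q : (ℝ × ℝ) × ℝ => dg K q.1.2 := by fun_prop
  have e1 := m1 (measurableSet_singleton 1)
  have e2 := m2 (measurableSet_singleton 1)
  have e3 := measurableSet_le m3 m4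
  have e4 := measurableSet_le m4 m3
  have hS : MeasurableSet {q : (ℝ × ℝ) × ℝ |
        (dg K q.1.2 ≤ dg K q.1.1 → K.1 (q.1.2, q.2) = 1 → K.1 (q.1.1, q.2) = 1) ∧
        (dg K q.1.1 ≤ dg K q.1.2 → K.1 (q.1.1, q.2) = 1 → K.1 (q.1.2, q.2) = 1)} :=
    (e4.imp (e2.imp e1)).inter (e3.imp (e1.imp e2))
  filter_upwards [swap3 hS h1] with z hz
  exact Measure.ae_ae_of_ae_prod hz

/-- law of the degree -/
def law (K : Ker) : Measure ℝ := nu.map (dg K)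

instance law_prob (K : Ker) : IsProbabilityMeasure (law K) :=
  Measure.isProbabilityMeasure_map (dg_meas K).aemeasurable

lemma tie_null (μ : Measure ℝ) [IsProbabilityMeasure μ] (b : ℝ) :
    μ {a | μ.real (Set.Ici a) = b ∧ μ.real (Set.Ioi a) = b} = 0 := by
  set S := {a | μ.real (Set.Ici a) = b ∧ μ.real (Set.Ioi a) = b} with hS
  have key : ∀ a ∈ S, ∀ a' ∈ S, μ (Set.Icc a a') = 0 := by
    intro a ha a' ha'
    rcases le_or_gt a a' with h | h
    · have h1 : μ.real (Set.Ici a) = μ.real (Set.Icc a a') + μ.real (Set.Ioi a') := by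
        rw [← Set.Icc_union_Ioi_eq_Ici h]
        refine measureReal_union ?_ measurableSet_Ioi
        exact Set.disjoint_left.2 fun x hx hx' => not_lt.2 hx.2 hx'
      rw [ha.1, ha'.2] at h1
      have h2 : μ.real (Set.Icc a a') = 0 := by linarith
      rwa [measureReal_eq_zero_iff] at h2
    · rw [Set.Icc_eq_empty (not_le.2 h)]; simp
  refine measure_null_of_locally_null S fun x hx => ?_
  have lo : ∃ O ∈ nhds x, μ (S ∩ O ∩ Set.Iic x) = 0 := by
    by_cases h : ∃ l ∈ S, l < x
    · obtain ⟨l, hl, hlx⟩ := h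
      refine ⟨Set.Ioi l, Ioi_mem_nhds hlx, measure_mono_null ?_ (key l hl x hx)⟩
      rintro y ⟨⟨_, h1⟩, h2⟩
      exact ⟨le_of_lt h1, h2⟩
    · push Not at h
      refine ⟨Set.univ, Filter.univ_mem, measure_mono_null ?_ (key x hx x hx)⟩
      rintro y ⟨⟨h1, _⟩, h2⟩
      exact ⟨h y h1, h2⟩
  have hi : ∃ O ∈ nhds x, μ (S ∩ O ∩ Set.Ici x) = 0 := by
    by_cases h : ∃ l ∈ S, x < l
    · obtain ⟨l, hl, hlx⟩ := h
      refine ⟨Set.Iio l, Iio_mem_nhds hlx, measure_mono_null ?_ (key x hx l hl)⟩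
      rintro y ⟨⟨_, h1⟩, h2⟩
      exact ⟨h2, le_of_lt h1⟩
    · push Not at h
      refine ⟨Set.univ, Filter.univ_mem, measure_mono_null ?_ (key x hx x hx)⟩
      rintro y ⟨⟨h1, _⟩, h2⟩
      exact ⟨h2, h y h1⟩
  obtain ⟨O, hO, h1⟩ := lo
  obtain ⟨O', hO', h2⟩ := hi
  refine ⟨S ∩ (O ∩ O'), Filter.inter_mem self_mem_nhdsWithin
    (mem_nhdsWithin_of_mem_nhds (Filter.inter_mem hO hO')), ?_⟩
  refine measure_mono_null ?_ (measure_union_null h1 h2)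
  rintro y ⟨hy, hy1, hy2⟩
  rcases le_total y x with h | h
  · exact Or.inl ⟨⟨hy, hy1⟩, h⟩
  · exact Or.inr ⟨⟨hy, hy2⟩, h⟩

/-- upper tail function -/
def tail (μ : Measure ℝ) (s : ℝ) : ℝ := μ.real (Set.Ici s)

lemma tail_anti (μ : Measure ℝ) [IsProbabilityMeasure μ] : Antitone (tail μ) := fun _ _ h =>
  measureReal_mono (Set.Ici_subset_Ici.2 h)

lemma law_real (K : Ker) {s : Set ℝ} (hs : MeasurableSet s) :
    (law K).real s = nu.real {x | dg K x ∈ s} := by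
  rw [measureReal_def, measureReal_def, law, Measure.map_apply (dg_meas K) hs]
  rfl

lemma thresh (K : Ker) (hK : SymK K) (h : ∀ᵐ x ∂(Measure.pi fun _ => nu), c4 K x = 0) :
    ∀ᵐ p ∂(nu.prod nu), (K.1 p = 1 ↔ tail (law K) (dg K p.2) ≤ dg K p.1) := by
  have hKm : Measurable K.1 := K.2.1
  have hd := dg_meas K
  have ht : Measurable (tail (law K)) := (tail_anti _).measurable
  have hm : MeasurableSet {p : ℝ × ℝ | (K.1 p = 1 ↔ tail (law K) (dg K p.2) ≤ dg K p.1)} := by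
    have e1 : MeasurableSet {p : ℝ × ℝ | K.1 p = 1} := hKm (measurableSet_singleton 1)
    have e2 : MeasurableSet {p : ℝ × ℝ | tail (law K) (dg K p.2) ≤ dg K p.1} :=
      measurableSet_le (by fun_prop) (by fun_prop)
    exact e1.iff e2
  rw [Measure.ae_prod_iff_ae_ae hm]
  filter_upwards [nest K hK h] with z hz
  have hnull : ∀ᵐ x ∂nu, ¬ ((law K).real (Set.Ici (dg K x)) = dg K z ∧
      (law K).real (Set.Ioi (dg K x)) = dg K z) := by
    have := tie_null (law K) (dg K z)
    rw [← compl_mem_ae_iff] at this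
    exact ae_of_ae_map hd.aemeasurable this
  filter_upwards [hz, hnull] with x hx hx0
  have hdz : dg K z = nu.real {y | K.1 (y, z) = 1} := by
    unfold dg; congr 1; ext y; show K.1 (z, y) = 1 ↔ K.1 (y, z) = 1; rw [hK]
  rw [hK z x]
  constructor
  · intro hA
    unfold tail
    rw [law_real K measurableSet_Ici, hdz, measureReal_def, measureReal_def]
    refine ENNReal.toReal_mono (measure_ne_top _ _) (measure_mono_ae ?_)
    filter_upwards [hx] with x' hx' hle
    exact hx'.2 hle hA
  · intro hle
    by_contra hA
    have h2 : dg K z ≤ (law K).real (Set.Ioi (dg K x)) := by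
      rw [law_real K measurableSet_Ioi, hdz, measureReal_def, measureReal_def]
      refine ENNReal.toReal_mono (measure_ne_top _ _) (measure_mono_ae ?_)
      filter_upwards [hx] with x' hx' hA'
      show dg K x < dg K x'
      by_contra hc
      exact hA (hx'.1 (not_lt.1 hc) hA')
    have h3 : (law K).real (Set.Ioi (dg K x)) ≤ (law K).real (Set.Ici (dg K x)) :=
      measureReal_mono Set.Ioi_subset_Ici_self
    have h4 : (law K).real (Set.Ici (dg K x)) ≤ dg K z := hle
    exact hx0 ⟨by linarith, by linarith⟩

/-- the threshold kernel -/
def gk (μ : Measure ℝ) (p : ℝ × ℝ) : ℝ :=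
  if tail μ p.1 ≤ p.2 ∧ tail μ p.2 ≤ p.1 then 1 else 0

lemma gk_meas (μ : Measure ℝ) [IsProbabilityMeasure μ] : Measurable (gk μ) := by
  have ht : Measurable (tail μ) := (tail_anti _).measurable
  refine Measurable.ite ?_ measurable_const measurable_const
  have e1 : MeasurableSet {p : ℝ × ℝ | tail μ p.1 ≤ p.2} :=
    measurableSet_le (by fun_prop) (by fun_prop)
  have e2 : MeasurableSet {p : ℝ × ℝ | tail μ p.2 ≤ p.1} :=
    measurableSet_le (by fun_prop) (by fun_prop)
  exact e1.inter e2

lemma K_eq (K : Ker) (hK : SymK K) (h : ∀ᵐ x ∂(Measure.pi fun _ => nu), c4 K x = 0) :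
    ∀ᵐ p ∂(nu.prod nu), K.1 p = gk (law K) (dg K p.1, dg K p.2) := by
  have h1 := thresh K hK h
  have h2 := (Measure.measurePreserving_swap (μ := nu) (ν := nu)).quasiMeasurePreserving.ae h1
  filter_upwards [h1, h2, K01 K hK h] with p a b c
  have b' : K.1 p = 1 ↔ tail (law K) (dg K p.1) ≤ dg K p.2 := by
    rw [← show K.1 (p.swap) = K.1 p from hK _ _]; exact b
  unfold gk
  by_cases hp : K.1 p = 1
  · rw [if_pos ⟨b'.1 hp, a.1 hp⟩, hp]
  · rw [if_neg (fun hc => hp (a.2 hc.2))]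
    exact c.resolve_right hp

/-- generalised inverse of the tail function -/
def qt (μ : Measure ℝ) (s : ℝ) : ℝ := sSup {t | t ∈ Set.Icc (0 : ℝ) 1 ∧ s ≤ tail μ t}

lemma qt_nonneg (μ : Measure ℝ) (s : ℝ) : 0 ≤ qt μ s := Real.sSup_nonneg fun _ h => h.1.1

lemma qt_le (μ : Measure ℝ) (s : ℝ) : qt μ s ≤ 1 := Real.sSup_le (fun _ h => h.1.2) zero_le_one

lemma le_qt (μ : Measure ℝ) {s t : ℝ} (ht : t ∈ Set.Icc (0 : ℝ) 1) (h : s ≤ tail μ t) :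
    t ≤ qt μ s := le_csSup ⟨1, fun _ h => h.1.2⟩ ⟨ht, h⟩

lemma qt_anti (μ : Measure ℝ) : Antitone (qt μ) := fun _ _ h =>
  Real.sSup_le (fun _ ht => le_qt μ ht.1 (h.trans ht.2)) (qt_nonneg _ _)

lemma tail_left (μ : Measure ℝ) [IsProbabilityMeasure μ] {s t : ℝ} (h : tail μ t < s) :
    ∃ t' < t, tail μ t' < s := by
  have h1 := tendsto_measure_biInter_gt (μ := μ) (s := fun r : ℝ => Set.Ici (t - r)) (a := 0)
    (fun r _ => measurableSet_Ici.nullMeasurableSet)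
    (fun i j _ hij => Set.Ici_subset_Ici.2 (by linarith)) ⟨1, one_pos, measure_ne_top _ _⟩
  have h2 : (⋂ r > (0 : ℝ), Set.Ici (t - r)) = Set.Ici t := by
    ext x
    simp only [Set.mem_iInter, Set.mem_Ici]
    constructor
    · intro hx
      refine le_of_forall_pos_sub_le fun e he => hx e he
    · intro hx r hr
      linarith
  rw [h2] at h1
  have h3 := (ENNReal.tendsto_toReal (measure_ne_top μ _)).comp h1
  have h4 := h3.eventually (gt_mem_nhds (show (μ (Set.Ici t)).toReal < s from h))
  obtain ⟨r, hr, hr'⟩ := (h4.and self_mem_nhdsWithin).exists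
  have hr0 : (0 : ℝ) < r := hr'
  exact ⟨t - r, by linarith, hr⟩

lemma qt_iff (μ : Measure ℝ) [IsProbabilityMeasure μ] {s t : ℝ} (ht0 : 0 < t) (ht1 : t ≤ 1) :
    t ≤ qt μ s ↔ s ≤ tail μ t := by
  refine ⟨fun h => ?_, le_qt μ ⟨ht0.le, ht1⟩⟩
  by_contra hc
  obtain ⟨t', ht', hl⟩ := tail_left μ (not_le.1 hc)
  have : qt μ s ≤ max t' 0 := by
    refine Real.sSup_le (fun u hu => ?_) (le_max_right _ _)
    refine le_trans ?_ (le_max_left _ _)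
    by_contra hu'
    have := tail_anti μ (not_le.1 hu').le
    linarith [hu.2]
  have h5 : max t' 0 < t := max_lt ht' ht0
  linarith

lemma nu_Iic {c : ℝ} (h0 : 0 ≤ c) (h1 : c ≤ 1) : nu (Set.Iic c) = ENNReal.ofReal c := by
  rw [Measure.restrict_apply measurableSet_Iic]
  have : Set.Iic c ∩ I01 = Set.Icc 0 c := by
    ext x; simp only [I01, Set.mem_inter_iff, Set.mem_Iic, Set.mem_Icc]
    constructor
    · rintro ⟨a, b, _⟩; exact ⟨b, a⟩
    · rintro ⟨a, b⟩; exact ⟨b, a, by linarith⟩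
  rw [this, Real.volume_Icc, sub_zero]

lemma qt_mp (K : Ker) : MeasurePreserving (qt (law K)) nu (law K) := by
  have hm : Measurable (qt (law K)) := (qt_anti _).measurable
  refine ⟨hm, ?_⟩
  have : IsProbabilityMeasure (nu.map (qt (law K))) :=
    Measure.isProbabilityMeasure_map hm.aemeasurable
  refine Measure.ext_of_Ici _ _ fun t => ?_
  rw [Measure.map_apply hm measurableSet_Ici]
  rcases le_or_gt t 0 with h0 | h0
  · have e1 : qt (law K) ⁻¹' Set.Ici t = Set.univ :=
      Set.eq_univ_of_forall fun s => h0.trans (qt_nonneg _ _)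
    have e2 : dg K ⁻¹' Set.Ici t = Set.univ :=
      Set.eq_univ_of_forall fun s => h0.trans (dg_nonneg _ _)
    rw [e1, law, Measure.map_apply (dg_meas K) measurableSet_Ici, e2]
  rcases le_or_gt t 1 with h1 | h1
  · have e1 : qt (law K) ⁻¹' Set.Ici t = Set.Iic (tail (law K) t) := by
      ext s; exact qt_iff _ h0 h1
    rw [e1, nu_Iic (c := tail (law K) t) measureReal_nonneg measureReal_le_one]
    exact ENNReal.ofReal_toReal (measure_ne_top _ _)
  · have e1 : qt (law K) ⁻¹' Set.Ici t = ∅ :=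
      Set.eq_empty_of_forall_notMem fun s hs => by
        have h5 : t ≤ qt (law K) s := hs
        linarith [qt_le (law K) s]
    have e2 : dg K ⁻¹' Set.Ici t = ∅ :=
      Set.eq_empty_of_forall_notMem fun s hs => by
        have h5 : t ≤ dg K s := hs
        linarith [dg_le K s]
    rw [e1, law, Measure.map_apply (dg_meas K) measurableSet_Ici, e2]

lemma hom_map {μ : Measure ℝ} [IsProbabilityMeasure μ] {f : ℝ → ℝ} (hf : MeasurePreserving f nu μ)
    {g : ℝ × ℝ → ℝ} (hg : Measurable g) {n : ℕ} (F : SimpleGraph (Fin n)) :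
    homDensity F (fun x y => g (f x, f y)) = ∫ y, ∏ p ∈ Finset.univ.filter
      (fun p : Fin n × Fin n => p.1 < p.2 ∧ F.Adj p.1 p.2), g (y p.1, y p.2)
        ∂(Measure.pi fun _ : Fin n => μ) := by
  have hmp := measurePreserving_pi (fun _ : Fin n => nu) (fun _ => μ) (fun _ => hf)
  unfold homDensity
  rw [cube_measure, ← hmp.map_eq, integral_map hmp.measurable.aemeasurable]
  refine Measurable.aestronglyMeasurable ?_
  refine Finset.measurable_prod _ fun p _ => ?_
  fun_prop

theorem backward (W : ℝ → ℝ → ℝ) (hW : memW W) (h : ∀ᵐ x ∂(volume.restrict (cube 4)),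
        W (x 0) (x 1) * (1 - W (x 1) (x 2)) * W (x 2) (x 3) * (1 - W (x 3) (x 0)) = 0) :
    ∃ U, MonotoneDecr01 U ∧ WeaklyIsomorphic W U := by
  set K := truncK W hW with hKd
  have hK : SymK K := truncK_sym W hW
  have hc : ∀ᵐ x ∂(Measure.pi fun _ => nu), c4 K x = 0 := by
    rw [cube_measure] at h
    filter_upwards [h, ae_cube 4] with x hx hxc
    rw [hKd, c4_trunc W hW hxc, hx]
  have hq := (qt_mp K).measurable
  have hg := gk_meas (law K)
  refine ⟨fun s t => gk (law K) (qt (law K) s, qt (law K) t), ⟨?_, ?_, ?_, ?_⟩, ?_⟩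
  · show Measurable fun p : ℝ × ℝ => gk (law K) (qt (law K) p.1, qt (law K) p.2)
    fun_prop
  · intro x _ y _
    simp only [gk, and_comm]
  · intro x _ y _
    simp only [gk]
    split_ifs <;> simp
  · intro x x' y y' _ _ _ _ hx hy
    have a1 := qt_anti (law K) hx
    have a2 := qt_anti (law K) hy
    have b1 := tail_anti (law K) a1
    have b2 := tail_anti (law K) a2
    simp only [gk]
    split_ifs with h1 h2 h2
    · exact le_rfl
    · exact absurd ⟨b1.trans (h1.1.trans a2), b2.trans (h1.2.trans a1)⟩ h2
    · exact zero_le_one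
    · exact le_rfl
  · intro n F
    have hdm : MeasurePreserving (dg K) nu (law K) := ⟨dg_meas K, rfl⟩
    rw [hom_map (qt_mp K) hg F, ← hom_map hdm hg F, ← homDensity_trunc W hW F, ← hKd]
    unfold homDensity
    rw [cube_measure]
    refine integral_congr_ae ?_
    have : ∀ p : Fin n × Fin n, ∀ᵐ x ∂(Measure.pi fun _ : Fin n => nu), p.1 < p.2 →
        K.1 (x p.1, x p.2) = gk (law K) (dg K (x p.1), dg K (x p.2)) := by
      intro p
      by_cases hp : p.1 < p.2
      · filter_upwards [ae_pair hp.ne (K_eq K hK hc)] with x hx _ using hx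
      · exact Filter.Eventually.of_forall fun x hx => absurd hx hp
    filter_upwards [ae_all_iff.2 this] with x hx
    refine Finset.prod_congr rfl fun p hp => hx p ?_
    exact (Finset.mem_filter.1 hp).2.1
/-- `W ∈ 𝒲` is weakly isomorphic to a monotone decreasing 0–1 valued
graphon iff `W(x₁,x₂)(1−W(x₂,x₃))W(x₃,x₄)(1−W(x₄,x₁)) = 0` a.e. on `[0,1]⁴`;
for `W ∈ 𝒲₀` this is further equivalent to the vanishing of the integral of this
product. -/
theorem statement6 (W : ℝ → ℝ → ℝ) (hW : memW W) :
    ((∃ U, MonotoneDecr01 U ∧ WeaklyIsomorphic W U) ↔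
      ∀ᵐ x ∂(volume.restrict (cube 4)),
        W (x 0) (x 1) * (1 - W (x 1) (x 2)) * W (x 2) (x 3) * (1 - W (x 3) (x 0)) = 0) ∧
    (memW0 W →
      ((∃ U, MonotoneDecr01 U ∧ WeaklyIsomorphic W U) ↔
        (∫ x in cube 4,
          W (x 0) (x 1) * (1 - W (x 1) (x 2)) * W (x 2) (x 3) * (1 - W (x 3) (x 0))) = 0)) := by
  refine ⟨⟨fun ⟨U, hU, h⟩ => forward W hW U hU h, backward W hW⟩, fun h0 => ?_⟩
  have h1 : (∃ U, MonotoneDecr01 U ∧ WeaklyIsomorphic W U) ↔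
      ∀ᵐ x ∂(volume.restrict (cube 4)),
        W (x 0) (x 1) * (1 - W (x 1) (x 2)) * W (x 2) (x 3) * (1 - W (x 3) (x 0)) = 0 :=
    ⟨fun ⟨U, hU, h⟩ => forward W hW U hU h, backward W hW⟩
  rw [h1, integral_eq_zero_iff_of_nonneg_ae]
  · rfl
  · filter_upwards [ae_restrict_mem (meas_cube 4)] with x hx
    have hh (i j : Fin 4) := h0.2.2 (x i) (hx i trivial) (x j) (hx j trivial)
    exact mul_nonneg (mul_nonneg (mul_nonneg (hh _ _).1 (sub_nonneg.2 (hh _ _).2)) (hh _ _).1)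
      (sub_nonneg.2 (hh _ _).2)
  · have h2 : Integrable (c4 (truncK W hW)) (volume.restrict (cube 4)) := by
      rw [cube_measure]; exact (c4_BM _).integrable _
    refine h2.congr ?_
    filter_upwards [ae_restrict_mem (meas_cube 4)] with x hx
    exact c4_trunc W hW hx
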